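/- Assume λ, α, θ > 0, β + θ < 1, (H2), m_τ, K_τ > 0 and 0 < τ < 1, and let (X, ρ) be a minimizer of J_{(X⁰,ρ⁰)} over 𝒜 with X ≥ X⁰. Then ρ ∈ L^∞(ℝ₊), the restriction of ρ to (0,X) belongs to H¹(0,X) (in particular ρ has a continuous representative ρ̄ on [0,X]), and the weak derivative ρ' satisfies ∫₀^X |ρ'(x)|² dx ≤ ‖ρ‖_{L^∞(0,X)} · 𝐖₂²(ρ, ρ⁰)/τ² and ∫₀^X |ρ'(x)| dx ≤ X^{1/2} ‖ρ‖_{L^∞(0,X)}^{1/2} · 𝐖₂(ρ, ρ⁰)/τ. -/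

import Mathlib

/-!
The estimates come from the Euler–Lagrange inequality of the minimization problem, tested with
displacements that keep the mass.

**Euler–Lagrange inequality.** Let `w` be continuous, supported in `(0, X)`, of mean zero, and let
`ξ = ∫₀ˣ w`. Pushing `ρ` forward by `x ↦ x + ε ξ(x)` keeps `Mfun ρ`, hence the terms `θ |M|` and
`ptau`, and lowers the entropy by `∫ ρ ln (1 + ε w)`. Pushing a coupling forward in its first
coordinate and applying Young's inequality raises `W2sq` by at most
`2 ε √(W2sq ρ ρ0) (∫ ξ² ρ)^{1/2} + O(ε²)`. Therefore minimality gives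
`∫ ρ ξ' ≤ √(W2sq ρ ρ0) / τ * (∫ ξ² ρ)^{1/2}` (`euler_lagrange`). One subtlety is that `W2sq` uses
the window `(0, max (xA ρ) (xA ρ0))`, which depends on the densities. If it grows, couplings are
extended by the identity (`IsCpl.extend`); it can shrink only when `ρ = 1 + ε w` near its right end,
which excludes at most one `ε` (`window_exception`).

**Regularity.** By Riesz representation in `L²(ρ)` there is `h` with `∫ ρ ξ' = -∫ h ρ ξ` and
`∫ h² ρ ≤ W2sq ρ ρ0 / τ²` (`exists_log_deriv`), so `ρ' = h ρ` weakly. This makes `ρ` continuous and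
bounded, `∫ |ρ'|² = ∫ h² ρ² ≤ ‖ρ‖_∞ ∫ h² ρ`, and Cauchy–Schwarz gives the `L¹` bound
(`regularity_of_euler_lagrange`).

**Integrability of the entropy.** Admissible densities are locally integrable only in the open
half-line, so the entropy of a minimizer might fail to be integrable at the origin, and its Bochner
integral would then be `0`. In that case the energy of `ρ` is compared with that of `ρ0` plus a thin
spike `2 / (x ln² x)` at the origin: its entropy integral is `0` as well, while its distance to `ρ0`
and its mass defect are arbitrarily small (`exists_spiked`). Minimality then forces
`W2sq ρ ρ0 = 0` and `Mdiff ρ ρ0 = 0`, so either `ρ = ρ0`, whose entropy is integrable, or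
`1 - ρ` is not integrable and `Mfun ρ0 = 0`. Both are impossible; the second because
`ρ0(0) ≤ exp (β + θ - 1) < 1` (`entropy_integrable_of_min`).
-/

open MeasureTheory Real Set ENNReal Filter Topology

noncomputable section

/-- The threshold `ρ₋ = exp(β - θ - 1)`. -/
def rhoMinus (β θ : ℝ) : ℝ := Real.exp (β - θ - 1)

/-- The threshold `ρ₊ = exp(β + θ - 1)`. -/
def rhoPlus (β θ : ℝ) : ℝ := Real.exp (β + θ - 1)

/-- Membership in the class `𝔸` of admissible densities on `ℝ₊`:
nonnegative a.e., locally integrable together with `ρ ln ρ`, and `≡ 1` a.e. eventually. -/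
def MemAdm (ρ : ℝ → ℝ) : Prop :=
  (∀ᵐ x : ℝ, 0 < x → 0 ≤ ρ x) ∧
  LocallyIntegrableOn ρ (Ioi 0) volume ∧
  LocallyIntegrableOn (fun x => ρ x * Real.log (ρ x)) (Ioi 0) volume ∧
  ∃ x : ℝ, 0 < x ∧ (∀ᵐ y : ℝ, y ∈ Ioi x → ρ y = 1)

/-- `x_ρ`, the infimum of the points after which `ρ ≡ 1` a.e. -/
def xA (ρ : ℝ → ℝ) : ℝ :=
  sInf {x : ℝ | 0 < x ∧ ∀ᵐ y : ℝ, y ∈ Ioi x → ρ y = 1}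

/-- Membership of a pair `(X, ρ)` in the admissible set `𝒜`. -/
def MemAdmSet (X : ℝ) (ρ : ℝ → ℝ) : Prop := MemAdm ρ ∧ xA ρ ≤ X

/-- `𝐌(ρ) = -∫_{ℝ₊} (1 - ρ)`. -/
def Mfun (ρ : ℝ → ℝ) : ℝ := -∫ x in Ioi (0:ℝ), (1 - ρ x)

/-- `M(ρ, ρ̃) = 𝐌(ρ) - 𝐌(ρ̃)`. -/
def Mdiff (ρ ρt : ℝ → ℝ) : ℝ := Mfun ρ - Mfun ρt

/-- `f(r) = r (ln r - β) + β`. -/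
def fEnt (β r : ℝ) : ℝ := r * (Real.log r - β) + β

/-- The measure `ν(ρ, ρ̃) = ρ · Leb⌊(0,Λ) + (M(ρ̃,ρ))₊ δ₀`, `Λ = max(x_ρ, x_ρ̃)`. -/
def nuMeas (ρ ρt : ℝ → ℝ) : Measure ℝ :=
  (volume.withDensity (fun x => ENNReal.ofReal (ρ x))).restrict
      (Ioo 0 (max (xA ρ) (xA ρt)))
    + (ENNReal.ofReal (Mdiff ρt ρ)) • Measure.dirac 0

/-- The squared Wasserstein distance `𝐖₂²(ρ, ρ̃)`: infimum of the quadratic transport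
cost over couplings of `ν(ρ,ρ̃)` and `ν(ρ̃,ρ)`. -/
def W2sq (ρ ρt : ℝ → ℝ) : ℝ :=
  sInf {r : ℝ | ∃ γ : Measure (ℝ × ℝ),
    γ.map Prod.fst = nuMeas ρ ρt ∧ γ.map Prod.snd = nuMeas ρt ρ ∧
    r = ∫ p, (p.1 - p.2)^2 ∂γ}

/-- The penalty function `p_τ(m) = (K_τ/2) ((-m - m_τ)₊)²`. -/
def ptau (Kτ mτ m : ℝ) : ℝ := Kτ / 2 * (max (-m - mτ) 0)^2

/-- The energy functional `E_{(X⁰,ρ⁰)}(X,ρ)`. -/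
def Efun (α β θ : ℝ) (ρ0 : ℝ → ℝ) (X : ℝ) (ρ : ℝ → ℝ) : ℝ :=
  (∫ x in Ioi (0:ℝ), fEnt β (ρ x)) + θ * |Mdiff ρ ρ0| - α * X

/-- The squared tensorized metric `𝐝²((X,ρ),(X⁰,ρ⁰))`. -/
def dsq (lam : ℝ) (X0 : ℝ) (ρ0 : ℝ → ℝ) (X : ℝ) (ρ : ℝ → ℝ) : ℝ :=
  W2sq ρ ρ0 + lam * (X - X0)^2

/-- The JKO functional `J_{(X⁰,ρ⁰)}`. -/
def Jfun (lam α β θ τ Kτ mτ : ℝ) (X0 : ℝ) (ρ0 : ℝ → ℝ) (X : ℝ) (ρ : ℝ → ℝ) : ℝ :=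
  dsq lam X0 ρ0 X ρ / (2 * τ) + Efun α β θ ρ0 X ρ + ptau Kτ mτ (Mdiff ρ ρ0)

/-- `(X, ρ)` is a minimizer of the JKO functional over `𝒜`. -/
def IsJKOMin (lam α β θ τ Kτ mτ : ℝ) (X0 : ℝ) (ρ0 : ℝ → ℝ) (X : ℝ) (ρ : ℝ → ℝ) : Prop :=
  MemAdmSet X ρ ∧
  ∀ Y : ℝ, ∀ σ : ℝ → ℝ, MemAdmSet Y σ →
    Jfun lam α β θ τ Kτ mτ X0 ρ0 X ρ ≤ Jfun lam α β θ τ Kτ mτ X0 ρ0 Y σ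

/-- Hypothesis (H2) on the initial data `(X⁰, ρ⁰)`, with bounds `ρ_min, ρ_max`
and with `ρ0'` a derivative of `ρ⁰` on `[0,X⁰]` witnessing `C^{1,1}` regularity. -/
def H2 (β θ X0 ρmin ρmax : ℝ) (ρ0 ρ0' : ℝ → ℝ) : Prop :=
  0 < X0 ∧
  (∀ x : ℝ, 0 < ρ0 x) ∧
  (∀ x ∈ Icc 0 X0, HasDerivWithinAt ρ0 (ρ0' x) (Icc 0 X0) x) ∧
  (∃ K : NNReal, LipschitzOnWith K ρ0' (Icc 0 X0)) ∧
  (∀ x : ℝ, X0 < x → ρ0 x = 1) ∧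
  ρ0 0 ∈ Icc (rhoMinus β θ) (rhoPlus β θ) ∧
  0 < ρmin ∧ (∀ x ∈ Ioc 0 X0, ρmin ≤ ρ0 x ∧ ρ0 x ≤ ρmax) ∧ ρmax ≤ 1

/-- The monotone transport structure in the case `M(ρ,ρ⁰) ≥ 0`: a nondecreasing map
`T₊ : [0,X] → [0,X]`, vanishing on `[0,ℓ₊]`, pushing `ρ·Leb⌊(ℓ₊,X)` to `ρ⁰·Leb⌊(0,X)`,
with `M = ∫₀^{ℓ₊} ρ` and realizing the squared Wasserstein distance. -/
def TransportPlus (ρ0 ρ : ℝ → ℝ) (X : ℝ) (T : ℝ → ℝ) (ℓ : ℝ) : Prop :=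
  0 ≤ ℓ ∧ Measurable T ∧ MonotoneOn T (Icc 0 X) ∧
  (∀ x ∈ Icc 0 X, T x ∈ Icc 0 X) ∧
  (∀ x ∈ Icc 0 ℓ, T x = 0) ∧ T X = X ∧
  Measure.map T ((volume.withDensity (fun x => ENNReal.ofReal (ρ x))).restrict (Ioo ℓ X))
    = (volume.withDensity (fun x => ENNReal.ofReal (ρ0 x))).restrict (Ioo 0 X) ∧
  Mdiff ρ ρ0 = ∫ x in (0:ℝ)..ℓ, ρ x ∧
  W2sq ρ ρ0 = ∫ x in (0:ℝ)..X, (x - T x)^2 * ρ x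

/-- The monotone transport structure in the case `M(ρ,ρ⁰) < 0`. -/
def TransportMinus (ρ0 ρ : ℝ → ℝ) (X : ℝ) (T : ℝ → ℝ) (ℓ : ℝ) : Prop :=
  0 < ℓ ∧ Measurable T ∧ MonotoneOn T (Icc 0 X) ∧
  (∀ x ∈ Icc 0 X, T x ∈ Icc ℓ X) ∧
  T 0 = ℓ ∧ T X = X ∧
  Measure.map T ((volume.withDensity (fun x => ENNReal.ofReal (ρ x))).restrict (Ioo 0 X))
    = (volume.withDensity (fun x => ENNReal.ofReal (ρ0 x))).restrict (Ioo ℓ X) ∧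
  -(Mdiff ρ ρ0) = ∫ y in (0:ℝ)..ℓ, ρ0 y ∧
  W2sq ρ ρ0 = (∫ x in (0:ℝ)..X, (x - T x)^2 * ρ x) + ∫ y in (0:ℝ)..ℓ, y^2 * ρ0 y

/-- Transport structure with sign convention: `T` is `T₊` (with some `ℓ₊`, and `ℓ₋ = ℓ`
is taken `= 0`) when `M ≥ 0`, and `T₋` with `ℓ₋ = ℓ > 0` when `M < 0`. -/
def TransportStruct (ρ0 ρ : ℝ → ℝ) (X : ℝ) (T : ℝ → ℝ) (ℓ : ℝ) : Prop :=
  (0 ≤ Mdiff ρ ρ0 ∧ ℓ = 0 ∧ ∃ ℓp : ℝ, TransportPlus ρ0 ρ X T ℓp) ∨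
  (Mdiff ρ ρ0 < 0 ∧ TransportMinus ρ0 ρ X T ℓ)

/-- `ρ̄` is the continuous representative of `ρ` on `[0,X]`. -/
def ContRep (X : ℝ) (ρ ρb : ℝ → ℝ) : Prop :=
  ContinuousOn ρb (Icc 0 X) ∧ (∀ᵐ x : ℝ, x ∈ Ioo 0 X → ρ x = ρb x)

/-! ### Riesz representation and test functions -/

/-- Riesz representation for a functional `L` dominated by `C ‖ι ·‖`. -/
lemma exists_inner_of_le {V E : Type*} [AddCommGroup V] [Module ℝ V] [NormedAddCommGroup E]
    [InnerProductSpace ℝ E] [CompleteSpace E] (ι : V →ₗ[ℝ] E) (L : V →ₗ[ℝ] ℝ) (C : ℝ)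
    (hC : 0 ≤ C) (H : ∀ v, L v ≤ C * ‖ι v‖) :
    ∃ h : E, ‖h‖ ≤ C ∧ ∀ v, L v = inner ℝ h (ι v) := by
  have Habs : ∀ v, |L v| ≤ C * ‖ι v‖ := fun v =>
    abs_le'.2 ⟨H v, by simpa using H (-v)⟩
  obtain ⟨g, hg⟩ := ι.rangeRestrict.exists_rightInverse_of_surjective ι.range_rangeRestrict
  have hg' : ∀ y : LinearMap.range ι, ι (g y) = y := fun y => by
    have := LinearMap.congr_fun hg y
    simpa using congrArg Subtype.val this
  let l : LinearMap.range ι →L[ℝ] ℝ := (L.comp g).mkContinuous C (fun y => by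
    have := Habs (g y)
    rw [hg'] at this
    simpa using this)
  obtain ⟨f, hf, hfn⟩ := exists_extension_norm_eq (LinearMap.range ι) l
  refine ⟨(InnerProductSpace.toDual ℝ E).symm f, ?_, fun v => ?_⟩
  · rw [LinearIsometryEquiv.norm_map, hfn]
    exact LinearMap.mkContinuous_norm_le _ hC _
  · rw [InnerProductSpace.toDual_symm_apply]
    have h1 := hf ⟨ι v, LinearMap.mem_range_self ι v⟩
    simp only at h1
    rw [h1]
    have h2 : l ⟨ι v, LinearMap.mem_range_self ι v⟩ = L (g ⟨ι v, LinearMap.mem_range_self ι v⟩) := rfl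
    rw [h2]
    have h3 := Habs (v - g ⟨ι v, LinearMap.mem_range_self ι v⟩)
    rw [map_sub, map_sub, hg', sub_self, norm_zero, mul_zero] at h3
    have := abs_nonpos_iff.1 h3
    linarith

/-- Mean-zero continuous functions supported in `(0, X)`: the admissible derivatives `ξ'` of the
displacement fields `ξ` with `ξ(0) = ξ(X) = 0`. -/
def testFun (X : ℝ) : Submodule ℝ (ℝ → ℝ) where
  carrier := {w | Continuous w ∧ (∀ x ∉ Ioo 0 X, w x = 0) ∧ ∫ x in (0:ℝ)..X, w x = 0}
  add_mem' := by
    rintro a b ⟨h1, h2, h3⟩ ⟨k1, k2, k3⟩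
    refine ⟨h1.add k1, fun x hx => by simp [h2 x hx, k2 x hx], ?_⟩
    simp only [Pi.add_apply]
    rw [intervalIntegral.integral_add (h1.intervalIntegrable _ _) (k1.intervalIntegrable _ _),
      h3, k3, add_zero]
  zero_mem' := ⟨continuous_zero, fun _ _ => rfl, by simp⟩
  smul_mem' := by
    rintro c a ⟨h1, h2, h3⟩
    refine ⟨h1.const_smul c, fun x hx => by simp [h2 x hx], ?_⟩
    simp only [Pi.smul_apply]
    rw [intervalIntegral.integral_smul, h3, smul_zero]

/-- The primitive `ξ(x) = ∫₀ˣ w`. -/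
def prim (w : ℝ → ℝ) (x : ℝ) : ℝ := ∫ s in (0:ℝ)..x, w s

lemma prim_hasDerivAt {w : ℝ → ℝ} (hw : Continuous w) (x : ℝ) : HasDerivAt (prim w) (w x) x :=
  intervalIntegral.integral_hasDerivAt_right (hw.intervalIntegrable _ _)
    (hw.stronglyMeasurableAtFilter _ _) hw.continuousAt

lemma prim_continuous {w : ℝ → ℝ} (hw : Continuous w) : Continuous (prim w) :=
  continuous_iff_continuousAt.2 fun x => (prim_hasDerivAt hw x).continuousAt

lemma prim_zero (w : ℝ → ℝ) : prim w 0 = 0 := by simp [prim]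

lemma prim_eq_zero_of_nonpos {X : ℝ} {w : ℝ → ℝ} (hw : w ∈ testFun X) {x : ℝ} (hx : x ≤ 0) :
    prim w x = 0 := by
  unfold prim
  rw [intervalIntegral.integral_congr (g := fun _ => 0)]
  · simp
  · intro y hy
    rw [uIcc_of_ge hx] at hy
    exact hw.2.1 y (fun h => absurd h.1 (not_lt.2 hy.2))

lemma prim_eq_zero_of_ge {X : ℝ} {w : ℝ → ℝ} (hw : w ∈ testFun X) {x : ℝ}
    (hx : X ≤ x) : prim w x = 0 := by
  unfold prim
  rw [← intervalIntegral.integral_add_adjacent_intervals (hw.1.intervalIntegrable 0 X)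
    (hw.1.intervalIntegrable X x), hw.2.2, zero_add]
  rw [intervalIntegral.integral_congr (g := fun _ => 0)]
  · simp
  · intro y hy
    rw [uIcc_of_le hx] at hy
    exact hw.2.1 y (fun h => absurd h.2 (not_lt.2 hy.1))

lemma testFun_bdd {X : ℝ} {w : ℝ → ℝ} (hw : w ∈ testFun X) : ∃ B, 0 < B ∧ ∀ x, |w x| ≤ B := by
  obtain ⟨B, hB⟩ := isCompact_Icc.exists_bound_of_continuousOn (s := Icc 0 X) hw.1.continuousOn
  refine ⟨max B 1, by positivity, fun x => ?_⟩
  by_cases hx : x ∈ Ioo 0 X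
  · exact (hB x ⟨hx.1.le, hx.2.le⟩).trans (le_max_left _ _)
  · rw [hw.2.1 x hx]; simp

lemma prim_add {w v : ℝ → ℝ} (hw : Continuous w) (hv : Continuous v) (x : ℝ) :
    prim (w + v) x = prim w x + prim v x := by
  unfold prim
  simp only [Pi.add_apply]
  exact intervalIntegral.integral_add (hw.intervalIntegrable _ _) (hv.intervalIntegrable _ _)

lemma prim_smul (c : ℝ) (w : ℝ → ℝ) (x : ℝ) : prim (c • w) x = c * prim w x := by
  unfold prim
  simp [Pi.smul_apply]

lemma prim_bdd {X : ℝ} {w : ℝ → ℝ} (hw : w ∈ testFun X) : ∃ B, 0 < B ∧ ∀ x, |prim w x| ≤ B := by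
  obtain ⟨B, hB⟩ := isCompact_Icc.exists_bound_of_continuousOn (s := Icc 0 X)
    (prim_continuous hw.1).continuousOn
  refine ⟨max B 1, by positivity, fun x => ?_⟩
  by_cases hx : x ∈ Icc 0 X
  · exact (hB x hx).trans (le_max_left _ _)
  · have : prim w x = 0 := by
      rcases le_total x 0 with h | h
      · exact prim_eq_zero_of_nonpos hw h
      · refine prim_eq_zero_of_ge hw ?_
        by_contra h2
        exact hx ⟨h, (not_le.1 h2).le⟩
    rw [this]; simp

/-! ### Weak logarithmic derivatives -/

lemma integral_mul_prim {X : ℝ} {q w : ℝ → ℝ}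
    (hq : IntervalIntegrable q volume 0 X) (hw : w ∈ testFun X) :
    ∫ x in (0:ℝ)..X, q x * prim w x = -∫ x in (0:ℝ)..X, prim q x * w x := by
  have hf : AbsolutelyContinuousOnInterval (prim w) 0 X :=
    (hw.1.intervalIntegrable 0 X).absolutelyContinuousOnInterval_intervalIntegral (c := 0) (by simp)
  have hg : AbsolutelyContinuousOnInterval (prim q) 0 X :=
    hq.absolutelyContinuousOnInterval_intervalIntegral (c := 0) (by simp)
  have key := hf.integral_mul_deriv_eq_deriv_mul hg
  rw [prim_eq_zero_of_ge hw le_rfl, prim_zero, zero_mul, zero_mul, sub_zero, zero_sub] at key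
  have h1 : ∫ x in (0:ℝ)..X, q x * prim w x = ∫ x in (0:ℝ)..X, prim w x * deriv (prim q) x := by
    apply intervalIntegral.integral_congr_ae
    filter_upwards [hq.ae_hasDerivAt_integral] with x hx hx'
    have := (hx (uIoc_subset_uIcc hx') 0 (by simp)).deriv
    change q x * prim w x = prim w x * deriv (fun x => ∫ t in (0:ℝ)..x, q t) x
    rw [this, mul_comm]
  rw [h1, key]
  congr 1
  apply intervalIntegral.integral_congr
  intro x _
  simp only
  rw [(prim_hasDerivAt hw.1 x).deriv, mul_comm]

/-- Du Bois-Reymond: a function orthogonal to all mean-zero test functions is constant. -/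
lemma ae_const_of_orthogonal {X : ℝ} (hX : 0 < X) {u : ℝ → ℝ}
    (hu : IntervalIntegrable u volume 0 X)
    (H : ∀ w ∈ testFun X, ∫ x in (0:ℝ)..X, u x * w x = 0) :
    ∃ c, ∀ᵐ x : ℝ, x ∈ Ioo 0 X → u x = c := by
  -- a continuous bump supported in `(0, X)`, used to correct the mean of a test function
  set b : ℝ → ℝ := fun x => max 0 (x * (X - x)) with hb
  have hbc : Continuous b := by fun_prop
  have hb0 : ∀ x ∉ Ioo 0 X, b x = 0 := by
    intro x hx
    refine max_eq_left ?_
    by_contra h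
    push Not at h
    refine hx ⟨?_, ?_⟩ <;> nlinarith
  have hbi : 0 < ∫ x in (0:ℝ)..X, b x := by
    refine intervalIntegral.intervalIntegral_pos_of_pos_on (hbc.intervalIntegrable _ _) ?_ hX
    intro x hx
    exact lt_max_of_lt_right (mul_pos hx.1 (by linarith [hx.2]))
  set m := ∫ x in (0:ℝ)..X, b x
  refine ⟨(∫ x in (0:ℝ)..X, u x * b x) / m, ?_⟩
  set c := (∫ x in (0:ℝ)..X, u x * b x) / m with hc
  have hui : IntegrableOn u (Ioo 0 X) := by
    rw [intervalIntegrable_iff_integrableOn_Ioc_of_le hX.le] at hu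
    exact hu.mono_set Ioo_subset_Ioc_self
  have := isOpen_Ioo.ae_eq_zero_of_integral_contDiff_smul_eq_zero (U := Ioo 0 X)
    (f := fun x => u x - c) (μ := volume)
    ((hui.sub (by simp : IntegrableOn (fun _ => c) (Ioo 0 X) volume)).locallyIntegrableOn) ?_
  · filter_upwards [this] with x hx hx'
    linarith [hx hx']
  intro φ hφ _ hφs
  have hφ0 : ∀ x ∉ Ioo 0 X, φ x = 0 := fun x hx => by
    by_contra h
    exact hx (hφs (subset_tsupport _ h))
  have hφc : Continuous φ := hφ.continuous
  set a := ∫ x in (0:ℝ)..X, φ x with ha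
  have hmem : (fun x => φ x - a / m * b x) ∈ testFun X := by
    refine ⟨by fun_prop, fun x hx => by simp [hφ0 x hx, hb0 x hx], ?_⟩
    rw [intervalIntegral.integral_sub (hφc.intervalIntegrable _ _)
      ((hbc.const_mul _).intervalIntegrable _ _), intervalIntegral.integral_const_mul]
    change a - a / m * m = 0
    field_simp
    ring
  have h1 := H _ hmem
  have huφ : IntervalIntegrable (fun x => u x * φ x) volume 0 X :=
    hu.mul_continuousOn hφc.continuousOn
  have hub : IntervalIntegrable (fun x => u x * b x) volume 0 X :=
    hu.mul_continuousOn hbc.continuousOn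
  have h2 : (∫ x in (0:ℝ)..X, u x * φ x) = a * c := by
    have : ∫ x in (0:ℝ)..X, u x * (φ x - a / m * b x)
        = (∫ x in (0:ℝ)..X, u x * φ x) - a / m * ∫ x in (0:ℝ)..X, u x * b x := by
      rw [← intervalIntegral.integral_const_mul, ← intervalIntegral.integral_sub huφ
        (hub.const_mul _)]
      congr 1; ext x; ring
    rw [this] at h1
    rw [hc]
    have : a * ((∫ x in (0:ℝ)..X, u x * b x) / m) = a / m * ∫ x in (0:ℝ)..X, u x * b x := by ring
    linarith
  have h3 : ∫ x, φ x • (u x - c) = ∫ x in (0:ℝ)..X, φ x • (u x - c) := by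
    rw [intervalIntegral.integral_of_le hX.le, setIntegral_eq_integral_of_forall_compl_eq_zero]
    intro x hx
    rw [hφ0 x (fun h => hx (Ioo_subset_Ioc_self h)), zero_smul]
  rw [h3]
  have h4 : ∫ x in (0:ℝ)..X, φ x • (u x - c)
      = (∫ x in (0:ℝ)..X, u x * φ x) - c * ∫ x in (0:ℝ)..X, φ x := by
    rw [← intervalIntegral.integral_const_mul, ← intervalIntegral.integral_sub huφ
      ((hφc.const_mul _).intervalIntegrable _ _)]
    congr 1; ext x; simp only [smul_eq_mul]; ring
  rw [h4, h2]
  ring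

/-- If `∫ ρ ξ' ≤ C ‖ξ‖_{L²(ρ)}` for all admissible displacements `ξ`, then `ρ' = h ρ` weakly with
`‖h‖_{L²(ρ)} ≤ C`. -/
lemma exists_log_deriv {X : ℝ} (hX : 0 < X) {ρ : ℝ → ℝ} (hm : Measurable ρ) (h0 : ∀ x, 0 ≤ ρ x)
    (hi : IntegrableOn ρ (Ioo 0 X)) {C : ℝ} (hC : 0 ≤ C)
    (H : ∀ w ∈ testFun X, (∫ x in (0:ℝ)..X, ρ x * w x)
      ≤ C * √(∫ x in Ioo 0 X, (prim w x) ^ 2 * ρ x)) :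
    ∃ h : ℝ → ℝ, Measurable h ∧ IntegrableOn (fun x => h x * ρ x) (Ioo 0 X) ∧
      IntegrableOn (fun x => (h x) ^ 2 * ρ x) (Ioo 0 X) ∧
      (∫ x in Ioo 0 X, (h x) ^ 2 * ρ x) ≤ C ^ 2 ∧
      ∃ c, ∀ᵐ x : ℝ, x ∈ Ioo 0 X → ρ x = c + prim (fun s => h s * ρ s) x := by
  set μ : Measure ℝ := (volume.restrict (Ioo 0 X)).withDensity (fun x => ENNReal.ofReal (ρ x))
    with hμ
  have hmo : Measurable (fun x => ENNReal.ofReal (ρ x)) := hm.ennreal_ofReal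
  have hint : ∀ g : ℝ → ℝ, ∫ x, g x ∂μ = ∫ x in Ioo 0 X, g x * ρ x := fun g => by
    rw [hμ, integral_withDensity_eq_integral_toReal_smul hmo (by simp)]
    congr 1; ext x
    rw [ENNReal.toReal_ofReal (h0 x), smul_eq_mul, mul_comm]
  have hitg : ∀ g : ℝ → ℝ, Integrable g μ ↔ IntegrableOn (fun x => g x * ρ x) (Ioo 0 X) :=
    fun g => by
    rw [hμ, integrable_withDensity_iff hmo (by simp)]
    simp only [ENNReal.toReal_ofReal (h0 _)]
    rfl
  have hfin : IsFiniteMeasure μ := by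
    constructor
    rw [hμ, withDensity_apply _ MeasurableSet.univ, Measure.restrict_univ]
    exact hi.lintegral_lt_top
  have hmem : ∀ w : testFun X, MemLp (prim w) 2 μ := fun w => by
    obtain ⟨B, -, hB⟩ := prim_bdd w.2
    exact MemLp.of_bound (prim_continuous w.2.1).aestronglyMeasurable B (Eventually.of_forall hB)
  have hwi : ∀ w : testFun X, IntervalIntegrable (fun x => ρ x * (w : ℝ → ℝ) x) volume 0 X :=
    fun w => by
    refine IntervalIntegrable.mul_continuousOn ?_ w.2.1.continuousOn
    rw [intervalIntegrable_iff_integrableOn_Ioo_of_le hX.le]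
    exact hi
  let ι : testFun X →ₗ[ℝ] Lp ℝ 2 μ :=
    { toFun := fun w => (hmem w).toLp _
      map_add' := fun v w => by
        rw [← MemLp.toLp_add]
        congr 1; ext x
        exact prim_add v.2.1 w.2.1 x
      map_smul' := fun c w => by
        rw [RingHom.id_apply, ← MemLp.toLp_const_smul]
        congr 1; ext x
        exact prim_smul c w x }
  let L : testFun X →ₗ[ℝ] ℝ :=
    { toFun := fun w => ∫ x in (0:ℝ)..X, ρ x * (w : ℝ → ℝ) x
      map_add' := fun v w => by
        rw [← intervalIntegral.integral_add (hwi v) (hwi w)]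
        congr 1; ext x
        simp only [Submodule.coe_add, Pi.add_apply]; ring
      map_smul' := fun c w => by
        rw [RingHom.id_apply, smul_eq_mul, ← intervalIntegral.integral_const_mul]
        congr 1; ext x
        simp only [Submodule.coe_smul, Pi.smul_apply, smul_eq_mul]; ring }
  have hnorm : ∀ k : Lp ℝ 2 μ, ‖k‖ ^ 2 = ∫ x, (k x) ^ 2 ∂μ := fun k => by
    rw [← real_inner_self_eq_norm_sq, L2.inner_def]
    congr 1; ext x
    simp [pow_two]
  obtain ⟨k, hk, hkL⟩ := exists_inner_of_le ι L C hC (fun w => by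
    have h1 : ‖ι w‖ ^ 2 = ∫ x in Ioo 0 X, (prim w x) ^ 2 * ρ x := by
      rw [hnorm, ← hint]
      refine integral_congr_ae ?_
      filter_upwards [(hmem w).coeFn_toLp] with x hx
      change ((hmem w).toLp _ x) ^ 2 = _
      rw [hx]
    rw [← Real.sqrt_sq (norm_nonneg (ι w)), h1]
    exact H w w.2)
  have hksm := (Lp.stronglyMeasurable k).measurable
  have hk2 : MemLp k 2 μ := Lp.memLp k
  have hk1 : Integrable k μ := hk2.integrable (by norm_num)
  have hk1' := (hitg _).1 hk1
  have hk2' := (hitg _).1 hk2.integrable_sq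
  refine ⟨fun x => -k x, hksm.neg, by simpa using hk1'.neg, by simpa using hk2', ?_, ?_⟩
  · have h1 := hnorm k
    rw [hint] at h1
    simp only [neg_sq]
    rw [← h1]
    exact pow_le_pow_left₀ (norm_nonneg _) hk 2
  · have hqi : IntervalIntegrable (fun s => -k s * ρ s) volume 0 X := by
      rw [intervalIntegrable_iff_integrableOn_Ioo_of_le hX.le]
      simpa using hk1'.neg
    have hpi : ContinuousOn (prim (fun s => -k s * ρ s)) (uIcc 0 X) :=
      intervalIntegral.continuousOn_primitive_interval' hqi (by simp)
    have hρi : IntervalIntegrable ρ volume 0 X := by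
      rw [intervalIntegrable_iff_integrableOn_Ioo_of_le hX.le]
      exact hi
    have horth : ∀ w ∈ testFun X,
        ∫ x in (0:ℝ)..X, (ρ x - prim (fun s => -k s * ρ s) x) * w x = 0 := by
      intro w hw
      have h1 := hkL ⟨w, hw⟩
      have h2 : inner ℝ k (ι ⟨w, hw⟩) = ∫ x in (0:ℝ)..X, k x * ρ x * prim w x := by
        rw [L2.inner_def, intervalIntegral.integral_of_le hX.le, integral_Ioc_eq_integral_Ioo]
        have : ∫ x, inner ℝ (k x) (ι ⟨w, hw⟩ x) ∂μ = ∫ x, k x * prim w x ∂μ := by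
          refine integral_congr_ae ?_
          filter_upwards [(hmem ⟨w, hw⟩).coeFn_toLp] with x hx
          change inner ℝ (k x) ((hmem ⟨w, hw⟩).toLp _ x) = _
          rw [hx]
          simp [mul_comm]
        rw [this, hint]
        congr 1; ext x; ring
      have h3 := integral_mul_prim hqi hw
      have h4 : ∫ x in (0:ℝ)..X, -k x * ρ x * prim w x
          = -∫ x in (0:ℝ)..X, k x * ρ x * prim w x := by
        rw [← intervalIntegral.integral_neg]
        congr 1; ext x; ring
      have h5 : L ⟨w, hw⟩ = ∫ x in (0:ℝ)..X, ρ x * w x := rfl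
      simp only [sub_mul]
      rw [intervalIntegral.integral_sub (hwi ⟨w, hw⟩) (hpi.intervalIntegrable.mul_continuousOn
        hw.1.continuousOn)]
      linarith
    obtain ⟨c, hc⟩ := ae_const_of_orthogonal hX (hρi.sub hpi.intervalIntegrable) horth
    refine ⟨c, ?_⟩
    filter_upwards [hc] with x hx hx'
    linarith [hx hx']

/-! ### Densities and couplings -/

lemma xA_nonneg (ρ : ℝ → ℝ) : 0 ≤ xA ρ := Real.sInf_nonneg fun _ hx => hx.1.le

lemma xA_le {ρ : ℝ → ℝ} {y : ℝ} (hy : 0 ≤ y) (h : ∀ᵐ z : ℝ, z ∈ Ioi y → ρ z = 1) :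
    xA ρ ≤ y := by
  refine le_of_forall_pos_le_add fun ε hε => ?_
  refine csInf_le ⟨0, fun _ hx => hx.1.le⟩ ⟨by linarith, ?_⟩
  filter_upwards [h] with z hz hz'
  exact hz (lt_trans (by linarith : y < y + ε) hz')

lemma xA_spec {ρ : ℝ → ℝ} (h : ∃ x : ℝ, 0 < x ∧ (∀ᵐ y : ℝ, y ∈ Ioi x → ρ y = 1)) :
    ∀ᵐ y : ℝ, y ∈ Ioi (xA ρ) → ρ y = 1 := by
  have h1 : ∀ n : ℕ, ∀ᵐ y : ℝ, y ∈ Ioi (xA ρ + 1 / ((n : ℝ) + 1)) → ρ y = 1 := fun n => by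
    obtain ⟨x, hx, hlt⟩ := exists_lt_of_csInf_lt h
      (show xA ρ < xA ρ + 1 / ((n : ℝ) + 1) by linarith [Nat.one_div_pos_of_nat (α := ℝ) (n := n)])
    filter_upwards [hx.2] with y hy hy'
    exact hy (hlt.trans hy')
  filter_upwards [ae_all_iff.2 h1] with y hy hy'
  obtain ⟨n, hn⟩ := exists_nat_one_div_lt (sub_pos.2 (show xA ρ < y from hy'))
  exact hy n (by simp only [mem_Ioi]; linarith)

/-! Every functional involved only sees densities up to null subsets of `(0, ∞)`. -/

lemma xA_congr {ρ σ : ℝ → ℝ} (h : ∀ᵐ x : ℝ, 0 < x → ρ x = σ x) : xA ρ = xA σ := by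
  unfold xA
  congr 1
  ext x
  simp only [mem_ofPred_eq]
  refine and_congr_right fun hx => ?_
  constructor
  · intro h1
    filter_upwards [h, h1] with y hy hy1 hy2
    rw [← hy (hx.trans hy2), hy1 hy2]
  · intro h1
    filter_upwards [h, h1] with y hy hy1 hy2
    rw [hy (hx.trans hy2), hy1 hy2]

lemma Mfun_congr {ρ σ : ℝ → ℝ} (h : ∀ᵐ x : ℝ, 0 < x → ρ x = σ x) : Mfun ρ = Mfun σ := by
  unfold Mfun
  congr 1
  refine setIntegral_congr_ae measurableSet_Ioi ?_
  filter_upwards [h] with x hx hx'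
  rw [hx hx']

/-- The absolutely continuous part `ρ · Leb⌊(0, L)` of `nuMeas`. -/
def densMeas (ρ : ℝ → ℝ) (L : ℝ) : Measure ℝ :=
  (volume.restrict (Ioo 0 L)).withDensity (fun x => ENNReal.ofReal (ρ x))

lemma nuMeas_eq (ρ r : ℝ → ℝ) : nuMeas ρ r = densMeas ρ (max (xA ρ) (xA r))
    + (ENNReal.ofReal (Mdiff r ρ)) • Measure.dirac 0 := by
  rw [nuMeas, densMeas, restrict_withDensity measurableSet_Ioo]

lemma densMeas_congr {ρ σ : ℝ → ℝ} (h : ∀ᵐ x : ℝ, 0 < x → ρ x = σ x) (L : ℝ) :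
    densMeas ρ L = densMeas σ L := by
  unfold densMeas
  refine withDensity_congr_ae ?_
  filter_upwards [ae_restrict_of_ae h, ae_restrict_mem measurableSet_Ioo] with x hx hx'
  rw [hx hx'.1]

lemma W2sq_congr {ρ σ r s : ℝ → ℝ} (h : ∀ᵐ x : ℝ, 0 < x → ρ x = σ x)
    (h' : ∀ᵐ x : ℝ, 0 < x → r x = s x) : W2sq ρ r = W2sq σ s := by
  unfold W2sq
  rw [nuMeas_eq, nuMeas_eq, nuMeas_eq, nuMeas_eq, xA_congr h, xA_congr h', Mdiff, Mdiff, Mdiff,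
    Mdiff, Mfun_congr h, Mfun_congr h', densMeas_congr h, densMeas_congr h']

lemma Jfun_congr {lam α β θ τ Kτ mτ X0 X : ℝ} {ρ σ r s : ℝ → ℝ}
    (h : ∀ᵐ x : ℝ, 0 < x → ρ x = σ x) (h' : ∀ᵐ x : ℝ, 0 < x → r x = s x) :
    Jfun lam α β θ τ Kτ mτ X0 r X ρ = Jfun lam α β θ τ Kτ mτ X0 s X σ := by
  have : ∫ x in Ioi (0:ℝ), fEnt β (ρ x) = ∫ x in Ioi (0:ℝ), fEnt β (σ x) := by
    refine setIntegral_congr_ae measurableSet_Ioi ?_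
    filter_upwards [h] with x hx hx'
    rw [hx hx']
  unfold Jfun dsq Efun
  rw [W2sq_congr h h', Mdiff, Mdiff, Mfun_congr h, Mfun_congr h', this]

/-- A measurable nonnegative density, eventually equal to `1`, whose deviation from `1` has finite
mass: the setting in which `Mfun` and `nuMeas` take their intended values. -/
structure NiceDensity (ρ : ℝ → ℝ) : Prop where
  meas : Measurable ρ
  nonneg : ∀ x, 0 ≤ ρ x
  one : ∃ x : ℝ, 0 < x ∧ (∀ᵐ y : ℝ, y ∈ Ioi x → ρ y = 1)
  int : IntegrableOn (fun x => 1 - ρ x) (Ioi 0)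

namespace NiceDensity
variable {ρ r : ℝ → ℝ}

lemma integrableOn (h : NiceDensity ρ) (L : ℝ) : IntegrableOn ρ (Ioo 0 L) := by
  have h1 : IntegrableOn (fun _ : ℝ => (1:ℝ)) (Ioo 0 L) := by simp
  have h2 := h1.sub (h.int.mono_set (Ioo_subset_Ioi_self : Ioo 0 L ⊆ Ioi 0))
  refine h2.congr_fun (fun x _ => ?_) measurableSet_Ioo
  simp

lemma Mfun_eq (h : NiceDensity ρ) {L : ℝ} (hL : xA ρ ≤ L) :
    Mfun ρ = (∫ x in Ioo 0 L, ρ x) - L := by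
  have hL0 : 0 ≤ L := (xA_nonneg ρ).trans hL
  have h1 : ∫ x in Ioi (0:ℝ), (1 - ρ x) = ∫ x in Ioc 0 L, (1 - ρ x) := by
    have : Ioi (0:ℝ) = Ioc 0 L ∪ Ioi L := (Ioc_union_Ioi_eq_Ioi hL0).symm
    rw [this, setIntegral_union (Ioc_disjoint_Ioi le_rfl) measurableSet_Ioi
      (h.int.mono_set Ioc_subset_Ioi_self) (h.int.mono_set (Ioi_subset_Ioi hL0))]
    have : ∫ x in Ioi L, (1 - ρ x) = 0 := by
      refine (setIntegral_congr_ae (g := fun _ => 0) measurableSet_Ioi ?_).trans (by simp)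
      filter_upwards [xA_spec h.one] with x hx hx'
      rw [hx (lt_of_le_of_lt hL hx'), sub_self]
    rw [this, add_zero]
  rw [Mfun, h1, integral_Ioc_eq_integral_Ioo, integral_sub (by simp) (h.integrableOn L)]
  simp [hL0]

lemma densMeas_univ (h : NiceDensity ρ) (L : ℝ) :
    densMeas ρ L univ = ENNReal.ofReal (∫ x in Ioo 0 L, ρ x) := by
  rw [densMeas, withDensity_apply _ MeasurableSet.univ, Measure.restrict_univ,
    ofReal_integral_eq_lintegral_ofReal (h.integrableOn L) (Eventually.of_forall h.nonneg)]

lemma nuMeas_univ (h : NiceDensity ρ) (h' : NiceDensity r) :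
    nuMeas ρ r univ = ENNReal.ofReal (max (∫ x in Ioo 0 (max (xA ρ) (xA r)), ρ x)
      (∫ x in Ioo 0 (max (xA ρ) (xA r)), r x)) := by
  rw [nuMeas_eq, Measure.add_apply, Measure.smul_apply, h.densMeas_univ, Mdiff,
    h.Mfun_eq (le_max_left _ (xA r)), h'.Mfun_eq (le_max_right (xA ρ) _)]
  set A := ∫ x in Ioo 0 (max (xA ρ) (xA r)), ρ x with hA
  set B := ∫ x in Ioo 0 (max (xA ρ) (xA r)), r x
  have hA0 : 0 ≤ A := integral_nonneg h.nonneg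
  simp only [measure_univ, smul_eq_mul, mul_one]
  rcases le_total A B with hAB | hAB
  · rw [← ENNReal.ofReal_add hA0 (by linarith), max_eq_right hAB]
    congr 1; ring
  · rw [max_eq_left hAB, ENNReal.ofReal_of_nonpos
      (show B - max (xA ρ) (xA r) - (A - max (xA ρ) (xA r)) ≤ 0 by linarith), add_zero]

lemma nuMeas_univ_comm (h : NiceDensity ρ) (h' : NiceDensity r) :
    nuMeas ρ r univ = nuMeas r ρ univ := by
  rw [h.nuMeas_univ h', h'.nuMeas_univ h, max_comm (xA r), max_comm (∫ x in _, r x)]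

lemma nuMeas_finite (h : NiceDensity ρ) (h' : NiceDensity r) : IsFiniteMeasure (nuMeas ρ r) :=
  ⟨by rw [h.nuMeas_univ h']; exact ENNReal.ofReal_lt_top⟩

end NiceDensity

lemma nuMeas_ae_mem (ρ r : ℝ → ℝ) :
    ∀ᵐ x ∂(nuMeas ρ r), x ∈ Icc 0 (max (xA ρ) (xA r)) := by
  have hL : 0 ≤ max (xA ρ) (xA r) := (xA_nonneg ρ).trans (le_max_left _ _)
  rw [nuMeas_eq, ae_add_measure_iff]
  constructor
  · refine (withDensity_absolutelyContinuous _ _).ae_le ?_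
    filter_upwards [ae_restrict_mem measurableSet_Ioo] with x hx
    exact ⟨hx.1.le, hx.2.le⟩
  · refine Measure.ae_smul_measure ?_ _
    exact (ae_dirac_iff measurableSet_Icc).2 ⟨le_rfl, hL⟩

/-- `γ` is a coupling of `ν(ρ, r)` and `ν(r, ρ)`. -/
def IsCpl (γ : Measure (ℝ × ℝ)) (ρ r : ℝ → ℝ) : Prop :=
  γ.map Prod.fst = nuMeas ρ r ∧ γ.map Prod.snd = nuMeas r ρ

lemma W2sq_nonneg (ρ r : ℝ → ℝ) : 0 ≤ W2sq ρ r := by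
  refine Real.sInf_nonneg ?_
  rintro _ ⟨γ, -, -, rfl⟩
  exact integral_nonneg fun _ => sq_nonneg _

namespace IsCpl
variable {γ : Measure (ℝ × ℝ)} {ρ r : ℝ → ℝ}

lemma W2sq_le (h : IsCpl γ ρ r) : W2sq ρ r ≤ ∫ p, (p.1 - p.2)^2 ∂γ := by
  refine csInf_le ⟨0, ?_⟩ ⟨γ, h.1, h.2, rfl⟩
  rintro _ ⟨γ, -, -, rfl⟩
  exact integral_nonneg fun _ => sq_nonneg _

lemma finite (h : IsCpl γ ρ r) (h1 : NiceDensity ρ) (h2 : NiceDensity r) : IsFiniteMeasure γ := by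
  constructor
  have := h1.nuMeas_finite h2
  have h3 : (γ.map Prod.fst) univ < ⊤ := by rw [h.1]; exact measure_lt_top _ _
  rwa [Measure.map_apply measurable_fst MeasurableSet.univ, preimage_univ] at h3

lemma ae_mem (h : IsCpl γ ρ r) : ∀ᵐ p ∂γ, p.1 ∈ Icc 0 (max (xA ρ) (xA r)) ∧
    p.2 ∈ Icc 0 (max (xA ρ) (xA r)) := by
  have h1 := nuMeas_ae_mem ρ r
  have h2 := nuMeas_ae_mem r ρ
  rw [← h.1] at h1
  rw [← h.2, max_comm] at h2
  exact (ae_of_ae_map measurable_fst.aemeasurable h1).and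
    (ae_of_ae_map measurable_snd.aemeasurable h2)

lemma integrable (h : IsCpl γ ρ r) (h1 : NiceDensity ρ) (h2 : NiceDensity r) :
    Integrable (fun p : ℝ × ℝ => (p.1 - p.2)^2) γ := by
  have := h.finite h1 h2
  refine Integrable.of_bound (C := (max (xA ρ) (xA r))^2) (by fun_prop) ?_
  filter_upwards [h.ae_mem] with p hp
  rw [Real.norm_eq_abs, abs_of_nonneg (sq_nonneg _)]
  refine sq_le_sq' ?_ ?_ <;> linarith [hp.1.1, hp.1.2, hp.2.1, hp.2.2]

end IsCpl

lemma exists_cpl {ρ r : ℝ → ℝ} (h : NiceDensity ρ) (h' : NiceDensity r) : ∃ γ, IsCpl γ ρ r := by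
  have := h.nuMeas_finite h'
  have := h'.nuMeas_finite h
  have huv := h.nuMeas_univ_comm h'
  refine ⟨(nuMeas ρ r univ)⁻¹ • (nuMeas ρ r).prod (nuMeas r ρ), ?_, ?_⟩
  · rw [Measure.map_smul, Measure.map_fst_prod, ← huv, smul_smul]
    by_cases h0 : nuMeas ρ r univ = 0
    · rw [Measure.measure_univ_eq_zero.1 h0]; simp
    · rw [ENNReal.inv_mul_cancel h0 (measure_ne_top _ _), one_smul]
  · rw [Measure.map_smul, Measure.map_snd_prod, smul_smul]
    by_cases h0 : nuMeas ρ r univ = 0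
    · rw [Measure.measure_univ_eq_zero.1 (huv ▸ h0 : nuMeas r ρ univ = 0)]; simp
    · rw [ENNReal.inv_mul_cancel h0 (measure_ne_top _ _), one_smul]

lemma exists_cpl_lt {ρ r : ℝ → ℝ} (h : NiceDensity ρ) (h' : NiceDensity r) {δ : ℝ} (hδ : 0 < δ) :
    ∃ γ, IsCpl γ ρ r ∧ ∫ p, (p.1 - p.2)^2 ∂γ < W2sq ρ r + δ := by
  obtain ⟨γ, hγ⟩ := exists_cpl h h'
  obtain ⟨_, ⟨γ', h1, h2, rfl⟩, h3⟩ := exists_lt_of_csInf_lt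
    (s := {t : ℝ | ∃ γ : Measure (ℝ × ℝ),
      γ.map Prod.fst = nuMeas ρ r ∧ γ.map Prod.snd = nuMeas r ρ ∧ t = ∫ p, (p.1 - p.2)^2 ∂γ})
    ⟨_, γ, hγ.1, hγ.2, rfl⟩ (show sInf _ < W2sq ρ r + δ from lt_add_of_pos_right _ hδ)
  exact ⟨γ', ⟨h1, h2⟩, h3⟩

/-! ### Shifts of a density along a displacement -/

/-- `e` is the increasing diffeomorphism `x ↦ x + ε ξ(x)` of the line, where `ξ = prim w`. -/
structure IsShift (X : ℝ) (w : ℝ → ℝ) (ε : ℝ) (e : ℝ ≃o ℝ) : Prop where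
  test : w ∈ testFun X
  small : ∀ x, |ε * w x| ≤ 1 / 2
  eq : ∀ x, e x = x + ε * prim w x

lemma exists_isShift {X : ℝ} {w : ℝ → ℝ} {ε : ℝ} (hw : w ∈ testFun X)
    (hs : ∀ x, |ε * w x| ≤ 1 / 2) : ∃ e, IsShift X w ε e := by
  set T : ℝ → ℝ := fun x => x + ε * prim w x with hT
  have hd : ∀ x, HasDerivAt T (1 + ε * w x) x := fun x =>
    (hasDerivAt_id x).add ((prim_hasDerivAt hw.1 x).const_mul ε)
  have hmono : StrictMono T := strictMono_of_deriv_pos fun x => by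
    rw [(hd x).deriv]
    linarith [(abs_le.1 (hs x)).1]
  have hcont : Continuous T := continuous_iff_continuousAt.2 fun x => (hd x).continuousAt
  have hsurj : Function.Surjective T := by
    refine hcont.surjective ?_ ?_
    · refine tendsto_id.congr' ?_
      filter_upwards [eventually_ge_atTop X] with x hx
      simp [hT, prim_eq_zero_of_ge hw hx]
    · refine tendsto_id.congr' ?_
      filter_upwards [eventually_le_atBot 0] with x hx
      simp [hT, prim_eq_zero_of_nonpos hw hx]
  exact ⟨StrictMono.orderIsoOfSurjective T hmono hsurj, hw, hs, fun x => rfl⟩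

/-- The density of the push-forward of `ρ` under the shift `e`. -/
def pushDens (ρ w : ℝ → ℝ) (ε : ℝ) (e : ℝ ≃o ℝ) (y : ℝ) : ℝ :=
  ρ (e.symm y) / (1 + ε * w (e.symm y))

/-- A function vanishing a.e. beyond `z` and of zero total integral has a primitive vanishing
beyond `z`. -/
lemma prim_tail {X z : ℝ} {w : ℝ → ℝ} (hw : w ∈ testFun X)
    (h : ∀ᵐ x : ℝ, x ∈ Ioi z → w x = 0) {x : ℝ} (hx : z ≤ x) : prim w x = 0 := by
  have h1 : prim w (max x X) = 0 := prim_eq_zero_of_ge hw (le_max_right _ _)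
  have h2 : prim w (max x X) = prim w x + ∫ s in x..(max x X), w s :=
    (intervalIntegral.integral_add_adjacent_intervals (hw.1.intervalIntegrable 0 x)
      (hw.1.intervalIntegrable x _)).symm
  have h3 : ∫ s in x..(max x X), w s = 0 := by
    rw [intervalIntegral.integral_congr_ae (g := fun _ => 0)]
    · simp
    · filter_upwards [h] with s hs hs'
      rw [uIoc_of_le (le_max_left _ _)] at hs'
      exact hs (lt_of_le_of_lt hx hs'.1)
  linarith

lemma densMeas_eq_Ioc (ρ : ℝ → ℝ) (L : ℝ) : densMeas ρ L =
    (volume.restrict (Ioc 0 L)).withDensity (fun x => ENNReal.ofReal (ρ x)) := by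
  rw [densMeas, restrict_Ioo_eq_restrict_Ioc]

lemma densMeas_extend {ρ : ℝ → ℝ}
    (hρ : ∃ x : ℝ, 0 < x ∧ (∀ᵐ y : ℝ, y ∈ Ioi x → ρ y = 1)) {A L : ℝ} (hA : xA ρ ≤ A)
    (hL : A ≤ L) : densMeas ρ A + volume.restrict (Ioc A L) = densMeas ρ L := by
  have hA0 : 0 ≤ A := (xA_nonneg ρ).trans hA
  have h1 : volume.restrict (Ioc A L)
      = (volume.restrict (Ioc A L)).withDensity (fun x => ENNReal.ofReal (ρ x)) := by
    conv_lhs => rw [← withDensity_one (μ := volume.restrict (Ioc A L))]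
    refine withDensity_congr_ae ?_
    filter_upwards [ae_restrict_of_ae (xA_spec hρ), ae_restrict_mem measurableSet_Ioc] with x hx hx'
    rw [hx (lt_of_le_of_lt hA hx'.1)]; simp
  rw [h1, densMeas_eq_Ioc, densMeas_eq_Ioc, ← Ioc_union_Ioc_eq_Ioc hA0 hL,
    Measure.restrict_union (Ioc_disjoint_Ioc_of_le le_rfl) measurableSet_Ioc,
    withDensity_add_measure]

namespace IsShift
variable {X : ℝ} {w : ℝ → ℝ} {ε : ℝ} {e : ℝ ≃o ℝ} {ρ r : ℝ → ℝ}

lemma pos (h : IsShift X w ε e) (x : ℝ) : 0 < 1 + ε * w x := by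
  linarith [(abs_le.1 (h.small x)).1]

lemma hasDerivAt (h : IsShift X w ε e) (x : ℝ) : HasDerivAt e (1 + ε * w x) x := by
  have : (e : ℝ → ℝ) = fun x => x + ε * prim w x := funext h.eq
  rw [this]
  exact (hasDerivAt_id x).add ((prim_hasDerivAt h.test.1 x).const_mul ε)

lemma fix (h : IsShift X w ε e) {x : ℝ} (hx : prim w x = 0) : e x = x := by
  rw [h.eq, hx, mul_zero, add_zero]

lemma map_zero (h : IsShift X w ε e) : e 0 = 0 := h.fix (prim_zero w)

lemma image_Ioi (h : IsShift X w ε e) : e '' Ioi 0 = Ioi 0 := by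
  rw [OrderIso.image_Ioi, h.map_zero]

lemma integrableOn_iff (h : IsShift X w ε e) (g : ℝ → ℝ) :
    IntegrableOn g (Ioi 0) ↔ IntegrableOn (fun x => (1 + ε * w x) * g (e x)) (Ioi 0) := by
  have := integrableOn_image_iff_integrableOn_abs_deriv_smul (s := Ioi 0) measurableSet_Ioi
    (fun x _ => (h.hasDerivAt x).hasDerivWithinAt) e.injective.injOn g
  rw [h.image_Ioi] at this
  simpa only [abs_of_pos (h.pos _), smul_eq_mul] using this

lemma integral_eq (h : IsShift X w ε e) (g : ℝ → ℝ) :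
    ∫ x in Ioi (0:ℝ), g x = ∫ x in Ioi (0:ℝ), (1 + ε * w x) * g (e x) := by
  have := integral_image_eq_integral_abs_deriv_smul (s := Ioi 0) measurableSet_Ioi
    (fun x _ => (h.hasDerivAt x).hasDerivWithinAt) e.injective.injOn g
  rw [h.image_Ioi] at this
  simpa only [abs_of_pos (h.pos _), smul_eq_mul] using this

lemma lintegral_eq (h : IsShift X w ε e) {s : Set ℝ} (hs : MeasurableSet s) (g : ℝ → ℝ≥0∞) :
    ∫⁻ x in e '' s, g x = ∫⁻ x in s, ENNReal.ofReal (1 + ε * w x) * g (e x) := by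
  have := lintegral_image_eq_lintegral_abs_deriv_mul hs
    (fun x _ => (h.hasDerivAt x).hasDerivWithinAt) e.injective.injOn g
  simpa only [abs_of_pos (h.pos _)] using this

lemma pushDens_apply (ρ w : ℝ → ℝ) (ε : ℝ) (e : ℝ ≃o ℝ) (x : ℝ) :
    pushDens ρ w ε e (e x) = ρ x / (1 + ε * w x) := by
  simp [pushDens]

lemma pushDens_of_ge (h : IsShift X w ε e) {y : ℝ} (hy : X ≤ y) :
    pushDens ρ w ε e y = ρ y := by
  have h1 : e y = y := h.fix (prim_eq_zero_of_ge h.test hy)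
  have h2 := pushDens_apply ρ w ε e y
  rw [h1, h.test.2.1 y (fun h => absurd h.2 (not_lt.2 hy))] at h2
  simpa using h2

lemma integrable_test (h : IsShift X w ε e) : Integrable w :=
  IntegrableOn.integrable_of_forall_notMem_eq_zero (s := Icc 0 X)
    (h.test.1.continuousOn.integrableOn_compact isCompact_Icc)
    (fun x hx => h.test.2.1 x (fun h => hx ⟨h.1.le, h.2.le⟩))

lemma integral_test (h : IsShift X w ε e) (hX : 0 < X) : ∫ x in Ioi (0:ℝ), w x = 0 := by
  have h1 := h.test.2.2
  have h2 : ∫ x in Ioc 0 X, w x = ∫ x, w x := setIntegral_eq_integral_of_forall_compl_eq_zero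
    fun x hx => h.test.2.1 x (fun h' => hx ⟨h'.1, h'.2.le⟩)
  have h3 : ∫ x in Ioi (0:ℝ), w x = ∫ x, w x := setIntegral_eq_integral_of_forall_compl_eq_zero
    fun x hx => h.test.2.1 x (fun h' => hx h'.1)
  rw [intervalIntegral.integral_of_le hX.le, h2] at h1
  rw [h3, h1]

lemma jac_one_sub (h : IsShift X w ε e) (x : ℝ) :
    (1 + ε * w x) * (1 - pushDens ρ w ε e (e x)) = (1 - ρ x) + ε * w x := by
  rw [pushDens_apply]
  have := (h.pos x).ne'
  field_simp
  ring

lemma nice (h : IsShift X w ε e) (hρ : NiceDensity ρ) : NiceDensity (pushDens ρ w ε e) where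
  meas := by
    have h1 : Measurable e.symm := e.symm.continuous.measurable
    exact (hρ.meas.comp h1).div (((h.test.1.measurable.comp h1).const_mul ε).const_add 1)
  nonneg y := div_nonneg (hρ.nonneg _) (h.pos _).le
  one := by
    obtain ⟨x, hx, hx1⟩ := hρ.one
    refine ⟨max x X, lt_max_of_lt_left hx, ?_⟩
    filter_upwards [hx1] with y hy hy'
    rw [h.pushDens_of_ge ((le_max_right _ _).trans (le_of_lt hy')),
      hy (mem_Ioi.2 (lt_of_le_of_lt (le_max_left x X) hy'))]
  int := by
    rw [h.integrableOn_iff]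
    simp only [h.jac_one_sub]
    exact hρ.int.add (h.integrable_test.const_mul ε).integrableOn

lemma xA_le_X (h : IsShift X w ε e) (hρ : NiceDensity ρ) (hX : 0 < X) (hx : xA ρ ≤ X) :
    xA (pushDens ρ w ε e) ≤ X := by
  refine xA_le hX.le ?_
  filter_upwards [xA_spec hρ.one] with y hy hy'
  rw [h.pushDens_of_ge (le_of_lt hy'), hy (lt_of_le_of_lt hx hy')]

lemma Mfun_eq (h : IsShift X w ε e) (hρ : NiceDensity ρ) (hX : 0 < X) :
    Mfun (pushDens ρ w ε e) = Mfun ρ := by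
  unfold Mfun
  rw [h.integral_eq]
  simp only [h.jac_one_sub]
  rw [integral_add hρ.int (h.integrable_test.const_mul ε).integrableOn, integral_const_mul,
    h.integral_test hX, mul_zero, add_zero]

lemma jac_fEnt (h : IsShift X w ε e) (hρ : NiceDensity ρ) (β x : ℝ) :
    (1 + ε * w x) * fEnt β (pushDens ρ w ε e (e x))
      = fEnt β (ρ x) - ρ x * Real.log (1 + ε * w x) + β * (ε * w x) := by
  rw [pushDens_apply]
  have h1 := h.pos x
  unfold fEnt
  rcases (hρ.nonneg x).eq_or_lt with h0 | h0
  · rw [← h0]; simp; ring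
  · rw [Real.log_div h0.ne' h1.ne']
    field_simp
    ring

lemma integrableOn_mul_log (h : IsShift X w ε e) (hρ : NiceDensity ρ) :
    IntegrableOn (fun x => ρ x * Real.log (1 + ε * w x)) (Ioi 0) := by
  refine (IntegrableOn.integrable_of_forall_notMem_eq_zero (s := Ioo 0 X) ?_ ?_).integrableOn
  · refine (hρ.integrableOn X).mul_bdd (c := 1) ?_ ?_
    · exact (((h.test.1.measurable.const_mul ε).const_add 1).log).aestronglyMeasurable
    · refine Eventually.of_forall fun x => ?_
      have h1 := abs_le.1 (h.small x)
      rw [Real.norm_eq_abs, abs_le]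
      have h2 := Real.log_le_sub_one_of_pos (h.pos x)
      have h3 := Real.one_sub_inv_le_log_of_pos (h.pos x)
      have h4 : (1 + ε * w x)⁻¹ ≤ 2 := by
        rw [inv_le_comm₀ (h.pos x) (by norm_num)]; linarith
      constructor <;> linarith
  · intro x hx
    rw [h.test.2.1 x hx]; simp

lemma integrableOn_fEnt (h : IsShift X w ε e) (hρ : NiceDensity ρ) {β : ℝ}
    (hf : IntegrableOn (fun x => fEnt β (ρ x)) (Ioi 0)) :
    IntegrableOn (fun x => fEnt β (pushDens ρ w ε e x)) (Ioi 0) := by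
  rw [h.integrableOn_iff]
  simp only [h.jac_fEnt hρ]
  exact (hf.sub (h.integrableOn_mul_log hρ)).add
    ((h.integrable_test.const_mul ε).const_mul β).integrableOn

lemma integral_fEnt (h : IsShift X w ε e) (hρ : NiceDensity ρ) (hX : 0 < X) {β : ℝ}
    (hf : IntegrableOn (fun x => fEnt β (ρ x)) (Ioi 0)) :
    ∫ x in Ioi (0:ℝ), fEnt β (pushDens ρ w ε e x) = (∫ x in Ioi (0:ℝ), fEnt β (ρ x))
      - ∫ x in Ioi (0:ℝ), ρ x * Real.log (1 + ε * w x) := by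
  rw [h.integral_eq]
  simp only [h.jac_fEnt hρ]
  have h12 : IntegrableOn (fun x => fEnt β (ρ x) - ρ x * Real.log (1 + ε * w x)) (Ioi 0) :=
    hf.sub (h.integrableOn_mul_log hρ)
  rw [integral_add h12
    ((h.integrable_test.const_mul ε).const_mul β).integrableOn,
    integral_sub hf (h.integrableOn_mul_log hρ), integral_const_mul, integral_const_mul,
    h.integral_test hX]
  ring

lemma map_densMeas (h : IsShift X w ε e) {L : ℝ} (hL : e L = L) :
    (densMeas ρ L).map e = densMeas (pushDens ρ w ε e) L := by
  ext A hA
  have hem : Measurable e := e.continuous.measurable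
  rw [Measure.map_apply hem hA, densMeas, densMeas, withDensity_apply _ hA,
    withDensity_apply _ (hem hA), Measure.restrict_restrict hA,
    Measure.restrict_restrict (hem hA)]
  have himg : A ∩ Ioo 0 L = e '' (e ⁻¹' A ∩ Ioo 0 L) := by
    rw [image_preimage_inter, OrderIso.image_Ioo, h.map_zero, hL]
  rw [himg, h.lintegral_eq ((hem hA).inter measurableSet_Ioo)]
  congr 1; ext x
  rw [pushDens_apply, ← ENNReal.ofReal_mul (h.pos x).le]
  congr 1
  have := (h.pos x).ne'
  field_simp

/-- Where the pushed density is `1`, the original density equals the Jacobian. -/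
lemma ae_eq_jac (h : IsShift X w ε e) (hρ : NiceDensity ρ) {y : ℝ}
    (hy : ∀ᵐ t : ℝ, t ∈ Ioi y → pushDens ρ w ε e t = 1) :
    ∀ᵐ x : ℝ, x ∈ Ioi (e.symm y) → ρ x = 1 + ε * w x := by
  have h1 := h.lintegral_eq (s := Ioi (e.symm y)) measurableSet_Ioi
    (fun t => ‖pushDens ρ w ε e t - 1‖ₑ)
  rw [OrderIso.image_Ioi, OrderIso.apply_symm_apply] at h1
  have h2 : ∫⁻ t in Ioi y, ‖pushDens ρ w ε e t - 1‖ₑ = 0 := by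
    rw [setLIntegral_congr_fun_ae (g := fun _ => 0) measurableSet_Ioi]
    · simp
    · filter_upwards [hy] with t ht ht'
      simp [ht ht']
  have hm : Measurable fun x => ENNReal.ofReal (1 + ε * w x) * ‖pushDens ρ w ε e (e x) - 1‖ₑ := by
    have h3 : Measurable fun x => pushDens ρ w ε e (e x) :=
      (h.nice hρ).meas.comp e.continuous.measurable
    have h4 := h.test.1.measurable
    fun_prop
  rw [h2, eq_comm, lintegral_eq_zero_iff hm] at h1
  filter_upwards [(ae_restrict_iff' measurableSet_Ioi).1 h1] with x hx hx'
  have h3 := hx hx'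
  simp only [Pi.zero_apply, mul_eq_zero, ENNReal.ofReal_eq_zero, enorm_eq_zero] at h3
  have h4 := h3.resolve_left (not_le.2 (h.pos x))
  rw [pushDens_apply, sub_eq_zero, div_eq_one_iff_eq (h.pos x).ne'] at h4
  exact h4

/-- If the transport window does not shrink, the shift fixes its right end. -/
lemma fix_window (h : IsShift X w ε e) (hε : ε ≠ 0) (hρ : NiceDensity ρ)
    (hΛ : max (xA ρ) (xA r) ≤ max (xA (pushDens ρ w ε e)) (xA r)) :
    e (max (xA (pushDens ρ w ε e)) (xA r)) = max (xA (pushDens ρ w ε e)) (xA r) := by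
  set y := max (xA (pushDens ρ w ε e)) (xA r) with hy
  have h1 := h.ae_eq_jac hρ (y := y) (by
    filter_upwards [xA_spec (h.nice hρ).one] with t ht ht'
    exact ht (mem_Ioi.2 (lt_of_le_of_lt (le_max_left _ (xA r)) ht')))
  have hw0 : ∀ᵐ x : ℝ, x ∈ Ioi (max (e.symm y) (xA ρ)) → w x = 0 := by
    filter_upwards [h1, xA_spec hρ.one] with x hx hx1 hx'
    have h2 := hx (mem_Ioi.2 (lt_of_le_of_lt (le_max_left _ (xA ρ)) hx'))
    rw [hx1 (mem_Ioi.2 (lt_of_le_of_lt (le_max_right (e.symm y) _) hx'))] at h2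
    have h3 : ε * w x = 0 := by linarith
    exact (mul_eq_zero.1 h3).resolve_left hε
  rcases le_total (xA ρ) (e.symm y) with hz | hz
  · rw [max_eq_left hz] at hw0
    have h2 := h.fix (prim_tail h.test hw0 le_rfl)
    rw [OrderIso.apply_symm_apply] at h2
    exact (congrArg e h2).trans (e.apply_symm_apply y)
  · rw [max_eq_right hz] at hw0
    exact h.fix (prim_tail h.test hw0 ((le_max_left _ _).trans hΛ))

/-- If the transport window shrinks, then `ρ = 1 + ε w` on a half-line starting strictly before
`xA ρ`. -/
lemma of_shrink (h : IsShift X w ε e) (hε : ε ≠ 0) (hρ : NiceDensity ρ)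
    (hΛ : max (xA (pushDens ρ w ε e)) (xA r) < max (xA ρ) (xA r)) :
    ∃ z, 0 ≤ z ∧ z < xA ρ ∧ ∀ᵐ x : ℝ, x ∈ Ioi z → ρ x = 1 + ε * w x := by
  set y := xA (pushDens ρ w ε e) with hy
  have hlt : y < xA ρ := by
    rcases lt_max_iff.1 hΛ with h1 | h1
    · exact lt_of_le_of_lt (le_max_left _ _) h1
    · exact absurd h1 (not_lt.2 (le_max_right _ _))
  have h1 := h.ae_eq_jac hρ (y := y) (xA_spec (h.nice hρ).one)
  refine ⟨e.symm y, ?_, ?_, h1⟩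
  · rw [OrderIso.le_symm_apply, h.map_zero]
    exact xA_nonneg _
  · by_contra hz
    push Not at hz
    have hw0 : ∀ᵐ x : ℝ, x ∈ Ioi (e.symm y) → w x = 0 := by
      filter_upwards [h1, xA_spec hρ.one] with x hx hx1 hx'
      have h2 := hx hx'
      rw [hx1 (lt_of_le_of_lt hz hx')] at h2
      have h3 : ε * w x = 0 := by linarith
      exact (mul_eq_zero.1 h3).resolve_left hε
    have h2 := h.fix (prim_tail h.test hw0 le_rfl)
    rw [OrderIso.apply_symm_apply] at h2
    linarith

end IsShift

/-! ### Transport cost along a shift -/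

/-- A coupling can be enlarged by the identity coupling of the common density `1` beyond its
window, at no cost. -/
lemma IsCpl.extend {γ : Measure (ℝ × ℝ)} {ρ r : ℝ → ℝ} (h : IsCpl γ ρ r) (hρ : NiceDensity ρ)
    (hr : NiceDensity r) {L : ℝ} (hL : max (xA ρ) (xA r) ≤ L) :
    ∃ γ' : Measure (ℝ × ℝ), IsFiniteMeasure γ' ∧
      γ'.map Prod.fst = densMeas ρ L + (ENNReal.ofReal (Mdiff r ρ)) • Measure.dirac 0 ∧
      γ'.map Prod.snd = densMeas r L + (ENNReal.ofReal (Mdiff ρ r)) • Measure.dirac 0 ∧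
      (∀ᵐ p ∂γ', p.1 ∈ Icc 0 L ∧ p.2 ∈ Icc 0 L) ∧
      ∫ p, (p.1 - p.2)^2 ∂γ' = ∫ p, (p.1 - p.2)^2 ∂γ := by
  set A := max (xA ρ) (xA r) with hA
  have hA0 : 0 ≤ A := (xA_nonneg ρ).trans (le_max_left _ _)
  have hfin := h.finite hρ hr
  have hdm : Measurable (fun x : ℝ => (x, x)) := by fun_prop
  set ι := (volume.restrict (Ioc A L)).map (fun x : ℝ => (x, x)) with hι
  have hι0 : ∀ᵐ p ∂ι, p.1 ∈ Ioc A L ∧ p.2 = p.1 := by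
    rw [hι, ae_map_iff hdm.aemeasurable]
    · filter_upwards [ae_restrict_mem measurableSet_Ioc] with x hx using ⟨hx, rfl⟩
    · exact (measurableSet_Ioc.preimage measurable_fst).inter
        (measurableSet_eq_fun measurable_snd measurable_fst)
  have hιc : ∀ᵐ p ∂ι, (p.1 - p.2)^2 = 0 := by
    filter_upwards [hι0] with p hp
    rw [hp.2]; ring
  refine ⟨γ + ι, inferInstance, ?_, ?_, ?_, ?_⟩
  · rw [Measure.map_add _ _ measurable_fst, h.1, nuMeas_eq, hι, Measure.map_map measurable_fst hdm,
      ← densMeas_extend hρ.one (le_max_left _ (xA r)) hL]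
    simp only [Function.comp_def, Measure.map_id']
    rw [← hA]
    abel
  · rw [Measure.map_add _ _ measurable_snd, h.2, nuMeas_eq, hι, Measure.map_map measurable_snd hdm,
      ← densMeas_extend hr.one (le_max_right (xA ρ) _) hL, max_comm (xA r)]
    simp only [Function.comp_def, Measure.map_id']
    rw [← hA]
    abel
  · rw [ae_add_measure_iff]
    constructor
    · filter_upwards [h.ae_mem] with p hp
      exact ⟨⟨hp.1.1, hp.1.2.trans hL⟩, ⟨hp.2.1, hp.2.2.trans hL⟩⟩
    · filter_upwards [hι0] with p hp
      rw [hp.2]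
      exact ⟨⟨hA0.trans hp.1.1.le, hp.1.2⟩, ⟨hA0.trans hp.1.1.le, hp.1.2⟩⟩
  · rw [integral_add_measure (h.integrable hρ hr)
      ((integrable_zero _ _ _).congr (hιc.mono fun p hp => hp.symm)), integral_congr_ae hιc]
    simp

lemma integral_marginal {L c : ℝ} {ρ b : ℝ → ℝ} (hρ : NiceDensity ρ) (hb : Continuous b)
    (hb0 : b 0 = 0) (hbb : ∃ C, ∀ x, |b x| ≤ C) :
    ∫ x, b x ∂(densMeas ρ L + (ENNReal.ofReal c) • Measure.dirac 0) = ∫ x in Ioo 0 L, b x * ρ x := by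
  obtain ⟨C, hC⟩ := hbb
  have h1 : IsFiniteMeasure (densMeas ρ L) :=
    ⟨by rw [hρ.densMeas_univ]; exact ENNReal.ofReal_lt_top⟩
  have h2 : Integrable b (densMeas ρ L) :=
    Integrable.of_bound hb.aestronglyMeasurable C (Eventually.of_forall hC)
  have h3 : Integrable b ((ENNReal.ofReal c) • Measure.dirac (0:ℝ)) := by
    refine Integrable.smul_measure ?_ ENNReal.ofReal_ne_top
    exact Integrable.of_bound hb.aestronglyMeasurable C (Eventually.of_forall hC)
  rw [integral_add_measure h2 h3, integral_smul_measure, integral_dirac, hb0, smul_zero, add_zero,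
    densMeas, integral_withDensity_eq_integral_toReal_smul
      (hρ.meas.ennreal_ofReal) (Eventually.of_forall fun _ => ENNReal.ofReal_lt_top)]
  refine integral_congr_ae (Eventually.of_forall fun x => ?_)
  simp [ENNReal.toReal_ofReal (hρ.nonneg x), mul_comm]

lemma young_aux {a b ε s : ℝ} (hε : 0 < ε) (hs : 0 < s) :
    (a + ε * b)^2 ≤ (1 + ε * s) * a^2 + (ε^2 + ε / s) * b^2 := by
  have h1 : 0 ≤ ε / s * (s * a - b)^2 := by positivity
  have h2 : ε / s * (s * a - b)^2 = ε * s * a^2 - 2 * ε * a * b + ε / s * b^2 := by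
    field_simp
    ring
  nlinarith

namespace IsShift
variable {X : ℝ} {w : ℝ → ℝ} {ε : ℝ} {e : ℝ ≃o ℝ} {ρ r : ℝ → ℝ}

/-- First-order control of the transport cost along a shift whose window does not shrink. -/
lemma W2sq_le (h : IsShift X w ε e) (hε : 0 < ε) (hX : 0 < X) (hρ : NiceDensity ρ)
    (hr : NiceDensity r) (hxρ : xA ρ ≤ X) (hxr : xA r ≤ X)
    (hΛ : max (xA ρ) (xA r) ≤ max (xA (pushDens ρ w ε e)) (xA r)) {s : ℝ} (hs : 0 < s) :
    W2sq (pushDens ρ w ε e) r ≤ (1 + ε * s) * W2sq ρ r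
      + (ε^2 + ε / s) * ∫ x in Ioo 0 X, (prim w x)^2 * ρ x := by
  set σ := pushDens ρ w ε e with hσ
  set L := max (xA σ) (xA r) with hL
  set N := ∫ x in Ioo 0 X, (prim w x)^2 * ρ x
  have hσn : NiceDensity σ := h.nice hρ
  have hLX : L ≤ X := max_le (h.xA_le_X hρ hX hxρ) hxr
  have heL : e L = L := h.fix_window hε.ne' hρ hΛ
  have hem : Measurable e := e.continuous.measurable
  have hMσ : Mfun σ = Mfun ρ := h.Mfun_eq hρ hX
  have hpc := prim_continuous h.test.1
  have hb : ∃ C, ∀ x, |(prim w x)^2| ≤ C := by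
    obtain ⟨C, -, hC⟩ := prim_bdd h.test
    exact ⟨C^2, fun x => by rw [abs_pow]; exact pow_le_pow_left₀ (abs_nonneg _) (hC x) 2⟩
  have key : ∀ δ : ℝ, 0 < δ → W2sq σ r ≤ (1 + ε * s) * (W2sq ρ r + δ) + (ε^2 + ε / s) * N := by
    intro δ hδ
    obtain ⟨γ, hγ, hlt⟩ := exists_cpl_lt hρ hr hδ
    obtain ⟨γ', hfin, hf, hsnd, hmem, hcost⟩ := hγ.extend hρ hr hΛ
    have hTm : Measurable (fun p : ℝ × ℝ => (e p.1, p.2)) :=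
      (hem.comp measurable_fst).prodMk measurable_snd
    have hcpl : IsCpl (γ'.map fun p => (e p.1, p.2)) σ r := by
      constructor
      · rw [Measure.map_map measurable_fst hTm]
        have : (Prod.fst ∘ fun p : ℝ × ℝ => (e p.1, p.2)) = e ∘ Prod.fst := rfl
        rw [this, ← Measure.map_map hem measurable_fst, hf, Measure.map_add _ _ hem,
          Measure.map_smul, Measure.map_dirac' hem, h.map_zero, h.map_densMeas heL, nuMeas_eq,
          Mdiff, Mdiff, hMσ]
      · rw [Measure.map_map measurable_snd hTm]
        have : (Prod.snd ∘ fun p : ℝ × ℝ => (e p.1, p.2)) = Prod.snd := rfl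
        rw [this, hsnd, nuMeas_eq, max_comm (xA r), Mdiff, Mdiff, hMσ]
    refine hcpl.W2sq_le.trans ?_
    rw [integral_map hTm.aemeasurable (by fun_prop)]
    have hi1 : Integrable (fun p : ℝ × ℝ => (p.1 - p.2)^2) γ' := by
      refine Integrable.of_bound (C := L^2) (by fun_prop) ?_
      filter_upwards [hmem] with p hp
      rw [Real.norm_eq_abs, abs_of_nonneg (sq_nonneg _)]
      refine sq_le_sq' ?_ ?_ <;> linarith [hp.1.1, hp.1.2, hp.2.1, hp.2.2]
    have hi2 : Integrable (fun p : ℝ × ℝ => (prim w p.1)^2) γ' := by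
      obtain ⟨C, hC⟩ := hb
      exact Integrable.of_bound (C := C) (by fun_prop) (Eventually.of_forall fun p => hC p.1)
    have hI2 : ∫ p : ℝ × ℝ, (prim w p.1)^2 ∂γ' ≤ N := by
      have h1 : ∫ p : ℝ × ℝ, (prim w p.1)^2 ∂γ' = ∫ x, (prim w x)^2 ∂(γ'.map Prod.fst) := by
        rw [integral_map measurable_fst.aemeasurable (by fun_prop)]
      rw [h1, hf, integral_marginal hρ (by fun_prop) (by simp [prim_zero]) hb]
      refine setIntegral_mono_set ?_ (Eventually.of_forall fun x =>
        mul_nonneg (sq_nonneg _) (hρ.nonneg x)) (Ioo_subset_Ioo_right hLX).eventuallyLE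
      obtain ⟨C, hC⟩ := hb
      exact (hρ.integrableOn X).bdd_mul (c := C) (by fun_prop) (Eventually.of_forall hC)
    calc ∫ p : ℝ × ℝ, (e p.1 - p.2)^2 ∂γ'
        ≤ ∫ p : ℝ × ℝ, ((1 + ε * s) * (p.1 - p.2)^2 + (ε^2 + ε / s) * (prim w p.1)^2) ∂γ' := by
          refine integral_mono_of_nonneg (Eventually.of_forall fun _ => sq_nonneg _)
            ((hi1.const_mul _).add (hi2.const_mul _)) (Eventually.of_forall fun p => ?_)
          have := young_aux (a := p.1 - p.2) (b := prim w p.1) hε hs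
          rw [show p.1 - p.2 + ε * prim w p.1 = e p.1 - p.2 by rw [h.eq]; ring] at this
          exact this
      _ = (1 + ε * s) * ∫ p : ℝ × ℝ, (p.1 - p.2)^2 ∂γ'
            + (ε^2 + ε / s) * ∫ p : ℝ × ℝ, (prim w p.1)^2 ∂γ' := by
          rw [integral_add (hi1.const_mul _) (hi2.const_mul _), integral_const_mul,
            integral_const_mul]
      _ ≤ _ := by
          rw [hcost]
          gcongr
  refine le_of_forall_pos_le_add fun δ hδ => ?_
  have hpos : 0 < 1 + ε * s := by positivity
  have := key (δ / (1 + ε * s)) (by positivity)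
  rw [mul_add, mul_div_cancel₀ _ hpos.ne'] at this
  linarith

end IsShift

/-- For all but at most one amplitude the transport window does not shrink along the shift. -/
lemma window_exception {X : ℝ} {w : ℝ → ℝ} {ρ r : ℝ → ℝ} (hρ : NiceDensity ρ)
    {ε₁ ε₂ : ℝ} {e₁ e₂ : ℝ ≃o ℝ} (h₁ : IsShift X w ε₁ e₁) (h₂ : IsShift X w ε₂ e₂)
    (hε₁ : ε₁ ≠ 0) (hε₂ : ε₂ ≠ 0) (hne : ε₁ ≠ ε₂)
    (hΛ₁ : max (xA (pushDens ρ w ε₁ e₁)) (xA r) < max (xA ρ) (xA r))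
    (hΛ₂ : max (xA (pushDens ρ w ε₂ e₂)) (xA r) < max (xA ρ) (xA r)) : False := by
  obtain ⟨z₁, hz₁, hlt₁, ha₁⟩ := h₁.of_shrink hε₁ hρ hΛ₁
  obtain ⟨z₂, hz₂, hlt₂, ha₂⟩ := h₂.of_shrink hε₂ hρ hΛ₂
  have h : ∀ᵐ x : ℝ, x ∈ Ioi (max z₁ z₂) → ρ x = 1 := by
    filter_upwards [ha₁, ha₂] with x hx₁ hx₂ hx
    have h1 := hx₁ (mem_Ioi.2 (lt_of_le_of_lt (le_max_left z₁ z₂) hx))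
    have h2 := hx₂ (mem_Ioi.2 (lt_of_le_of_lt (le_max_right z₁ z₂) hx))
    have h3 : (ε₁ - ε₂) * w x = 0 := by linarith
    rw [h1, (mul_eq_zero.1 h3).resolve_left (sub_ne_zero.2 hne)]
    simp
  exact absurd (xA_le (le_max_of_le_left hz₁) h) (not_le.2 (max_lt hlt₁ hlt₂))

/-! ### The Euler–Lagrange inequality -/

lemma amgm_optimize {A W N : ℝ} (hW : 0 ≤ W) (hN : 0 ≤ N)
    (h : ∀ s : ℝ, 0 < s → 2 * A ≤ s * W + N / s) : A ≤ √W * √N := by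
  have key : ∀ δ : ℝ, 0 < δ → A ≤ √(W + δ) * √(N + δ) := by
    intro δ hδ
    have hW' : 0 < √(W + δ) := Real.sqrt_pos.2 (by linarith)
    have hN' : 0 < √(N + δ) := Real.sqrt_pos.2 (by linarith)
    have hs : 0 < √(N + δ) / √(W + δ) := by positivity
    have h1 := h _ hs
    have h2 : √(N + δ) / √(W + δ) * W ≤ √(N + δ) / √(W + δ) * (W + δ) := by gcongr; linarith
    have h3 : N / (√(N + δ) / √(W + δ)) ≤ (N + δ) / (√(N + δ) / √(W + δ)) := by gcongr; linarith
    have h4 : √(N + δ) / √(W + δ) * (W + δ) = √(W + δ) * √(N + δ) := by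
      nth_rewrite 2 [← Real.mul_self_sqrt (show 0 ≤ W + δ by linarith)]
      field_simp
    have h5 : (N + δ) / (√(N + δ) / √(W + δ)) = √(W + δ) * √(N + δ) := by
      nth_rewrite 1 [← Real.mul_self_sqrt (show 0 ≤ N + δ by linarith)]
      field_simp
    linarith
  have ht : Tendsto (fun δ : ℝ => √(W + δ) * √(N + δ)) (𝓝[>] 0) (𝓝 (√W * √N)) := by
    have hc : Continuous (fun δ : ℝ => √(W + δ) * √(N + δ)) := by fun_prop
    have := (hc.tendsto 0).mono_left (nhdsWithin_le_nhds (s := Ioi 0))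
    simpa using this
  exact ge_of_tendsto ht (by filter_upwards [self_mem_nhdsWithin] with δ hδ using key δ hδ)

lemma log_one_add_ge {t : ℝ} (ht : |t| ≤ 1 / 2) : t - 2 * t^2 ≤ Real.log (1 + t) := by
  have h1 := abs_le.1 ht
  have hpos : 0 < 1 + t := by linarith
  refine le_trans ?_ (Real.one_sub_inv_le_log_of_pos hpos)
  have h2 : 1 - (1 + t)⁻¹ - (t - 2 * t^2) = t^2 * (1 + 2 * t) / (1 + t) := by
    field_simp
    ring
  have : 0 ≤ t^2 * (1 + 2 * t) / (1 + t) :=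
    div_nonneg (mul_nonneg (sq_nonneg _) (by linarith)) hpos.le
  linarith

/-- Euler–Lagrange inequality: testing minimality against the shifts generated by `w`. -/
lemma euler_lagrange {lam α β θ τ Kτ mτ X0 X : ℝ} {ρ r w : ℝ → ℝ} (hτ : 0 < τ) (hX : 0 < X)
    (hρ : NiceDensity ρ) (hr : NiceDensity r)
    (hf : IntegrableOn (fun x => fEnt β (ρ x)) (Ioi 0))
    (hxρ : xA ρ ≤ X) (hxr : xA r ≤ X)
    (hmin : ∀ σ, NiceDensity σ → IntegrableOn (fun x => fEnt β (σ x)) (Ioi 0) → xA σ ≤ X →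
      Jfun lam α β θ τ Kτ mτ X0 r X ρ ≤ Jfun lam α β θ τ Kτ mτ X0 r X σ)
    (hw : w ∈ testFun X) :
    ∫ x in (0:ℝ)..X, ρ x * w x
      ≤ √(W2sq ρ r) / τ * √(∫ x in Ioo 0 X, (prim w x)^2 * ρ x) := by
  set N := ∫ x in Ioo 0 X, (prim w x)^2 * ρ x with hN
  set W := W2sq ρ r with hW
  have hW0 : 0 ≤ W := W2sq_nonneg _ _
  have hN0 : 0 ≤ N := integral_nonneg fun x => mul_nonneg (sq_nonneg _) (hρ.nonneg x)
  obtain ⟨C, hCpos, hC⟩ := testFun_bdd hw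
  have hsupp : ∀ g : ℝ → ℝ, IntegrableOn g (Ioo 0 X) → (∀ x, x ∉ Ioo 0 X → g x = 0) →
      IntegrableOn g (Ioi 0) := fun g hg h0 =>
    (IntegrableOn.integrable_of_forall_notMem_eq_zero hg h0).integrableOn
  have hi1 : IntegrableOn (fun x => ρ x * w x) (Ioi 0) := by
    refine hsupp _ ((hρ.integrableOn X).mul_bdd (c := C) hw.1.aestronglyMeasurable
      (Eventually.of_forall hC)) fun x hx => ?_
    rw [hw.2.1 x hx, mul_zero]
  have hi2 : IntegrableOn (fun x => ρ x * (w x)^2) (Ioi 0) := by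
    refine hsupp _ ((hρ.integrableOn X).mul_bdd (c := C^2) (hw.1.pow 2).aestronglyMeasurable
      (Eventually.of_forall fun x => ?_)) fun x hx => ?_
    · rw [norm_pow]; exact pow_le_pow_left₀ (norm_nonneg _) (hC x) 2
    · rw [hw.2.1 x hx]; simp
  set A := ∫ x in Ioi (0:ℝ), ρ x * w x with hA
  set B := ∫ x in Ioi (0:ℝ), ρ x * (w x)^2 with hB
  have hB0 : 0 ≤ B := integral_nonneg fun x => mul_nonneg (hρ.nonneg x) (sq_nonneg _)
  have hAeq : ∫ x in (0:ℝ)..X, ρ x * w x = A := by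
    have h2 : ∫ x in Ioc 0 X, ρ x * w x = ∫ x, ρ x * w x :=
      setIntegral_eq_integral_of_forall_compl_eq_zero fun x hx => by
        rw [hw.2.1 x (fun h' => hx ⟨h'.1, h'.2.le⟩), mul_zero]
    have h3 : A = ∫ x, ρ x * w x :=
      setIntegral_eq_integral_of_forall_compl_eq_zero fun x hx => by
        rw [hw.2.1 x (fun h' => hx h'.1), mul_zero]
    rw [intervalIntegral.integral_of_le hX.le, h2, h3]
  -- the inequality obtained from a single admissible amplitude `ε`
  have step : ∀ (ε : ℝ) (e : ℝ ≃o ℝ), 0 < ε → IsShift X w ε e →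
      max (xA ρ) (xA r) ≤ max (xA (pushDens ρ w ε e)) (xA r) → ∀ s : ℝ, 0 < s →
      2 * τ * A ≤ s * W + N / s + ε * (4 * τ * B + N) := by
    intro ε e hε h hΛ s hs
    have h1 := h.W2sq_le hε hX hρ hr hxρ hxr hΛ hs
    have h2 := hmin _ (h.nice hρ) (h.integrableOn_fEnt hρ hf) (h.xA_le_X hρ hX hxρ)
    unfold Jfun Efun dsq Mdiff at h2
    rw [h.Mfun_eq hρ hX, h.integral_fEnt hρ hX hf] at h2
    have h3 : ε * A - 2 * ε^2 * B ≤ ∫ x in Ioi (0:ℝ), ρ x * Real.log (1 + ε * w x) := by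
      have : ε * A - 2 * ε^2 * B
          = ∫ x in Ioi (0:ℝ), (ε * (ρ x * w x) - 2 * ε^2 * (ρ x * (w x)^2)) := by
        rw [integral_sub (hi1.const_mul _) (hi2.const_mul _), integral_const_mul,
          integral_const_mul]
      rw [this]
      refine integral_mono ((hi1.const_mul _).sub (hi2.const_mul _)) (h.integrableOn_mul_log hρ)
        fun x => ?_
      have h4 := mul_le_mul_of_nonneg_left (log_one_add_ge (h.small x)) (hρ.nonneg x)
      calc ε * (ρ x * w x) - 2 * ε^2 * (ρ x * (w x)^2)
          = ρ x * (ε * w x - 2 * (ε * w x)^2) := by ring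
        _ ≤ _ := h4
    have h5 : (W2sq (pushDens ρ w ε e) r + lam * (X - X0)^2) / (2 * τ)
        ≤ ((1 + ε * s) * W + (ε^2 + ε / s) * N + lam * (X - X0)^2) / (2 * τ) := by
      gcongr
    have h6 : ((1 + ε * s) * W + (ε^2 + ε / s) * N + lam * (X - X0)^2) / (2 * τ)
        = (W + lam * (X - X0)^2) / (2 * τ) + ε * ((s * W + N / s + ε * N) / (2 * τ)) := by
      field_simp
      ring
    have h7 : ε * (A - 2 * ε * B) ≤ ε * ((s * W + N / s + ε * N) / (2 * τ)) := by
      have : ε * (A - 2 * ε * B) = ε * A - 2 * ε^2 * B := by ring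
      rw [this]
      linarith
    have h8 := le_of_mul_le_mul_left h7 hε
    rw [le_div_iff₀ (by positivity)] at h8
    linarith
  -- among two amplitudes at most one is exceptional, so arbitrarily small ones are available
  have small : ∀ ε₀ : ℝ, 0 < ε₀ → ∀ s : ℝ, 0 < s →
      2 * τ * A ≤ s * W + N / s + ε₀ * (4 * τ * B + N) := by
    intro ε₀ hε₀ s hs
    set ε₁ := min ε₀ (1 / (2 * C)) with hε₁
    have hε₁pos : 0 < ε₁ := lt_min hε₀ (by positivity)
    have hsm : ∀ ε : ℝ, 0 < ε → ε ≤ ε₁ → ∀ x, |ε * w x| ≤ 1 / 2 := by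
      intro ε hε hle x
      rw [abs_mul, abs_of_pos hε]
      calc ε * |w x| ≤ 1 / (2 * C) * C :=
            mul_le_mul (hle.trans (min_le_right _ _)) (hC x) (abs_nonneg _) (by positivity)
        _ = 1 / 2 := by field_simp
    have fin : ∀ (ε : ℝ) (e : ℝ ≃o ℝ), 0 < ε → ε ≤ ε₁ → IsShift X w ε e →
        max (xA ρ) (xA r) ≤ max (xA (pushDens ρ w ε e)) (xA r) →
        2 * τ * A ≤ s * W + N / s + ε₀ * (4 * τ * B + N) := by
      intro ε e hε hle h hΛ
      have h1 := step ε e hε h hΛ s hs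
      have h2 : ε * (4 * τ * B + N) ≤ ε₀ * (4 * τ * B + N) :=
        mul_le_mul_of_nonneg_right (hle.trans (min_le_left _ _)) (by positivity)
      linarith
    obtain ⟨e₁, h₁⟩ := exists_isShift hw (hsm ε₁ hε₁pos le_rfl)
    obtain ⟨e₂, h₂⟩ := exists_isShift hw (hsm (ε₁ / 2) (by linarith) (by linarith))
    by_cases g₁ : max (xA ρ) (xA r) ≤ max (xA (pushDens ρ w ε₁ e₁)) (xA r)
    · exact fin ε₁ e₁ hε₁pos le_rfl h₁ g₁
    by_cases g₂ : max (xA ρ) (xA r) ≤ max (xA (pushDens ρ w (ε₁ / 2) e₂)) (xA r)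
    · exact fin _ e₂ (by linarith) (by linarith) h₂ g₂
    exact (window_exception hρ h₁ h₂ hε₁pos.ne' (by linarith) (by linarith)
      (not_le.1 g₁) (not_le.1 g₂)).elim
  have lim : ∀ s : ℝ, 0 < s → 2 * (τ * A) ≤ s * W + N / s := by
    intro s hs
    refine le_of_forall_pos_le_add fun δ hδ => ?_
    have hD : 0 < 4 * τ * B + N + 1 := by positivity
    have h1 := small (δ / (4 * τ * B + N + 1)) (by positivity) s hs
    have h2 : δ / (4 * τ * B + N + 1) * (4 * τ * B + N) ≤ δ := by
      rw [div_mul_eq_mul_div, div_le_iff₀ hD]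
      nlinarith
    linarith
  have := amgm_optimize hW0 hN0 lim
  rw [hAeq, div_mul_eq_mul_div, le_div_iff₀ hτ]
  linarith

/-! ### Regularity -/

/-- The regularity part: the Euler–Lagrange inequality, by duality, bounds the logarithmic
derivative of `ρ` in `L²(ρ)`, hence `ρ'` in `L²`. -/
lemma regularity_of_euler_lagrange {τ X W : ℝ} {ρ : ℝ → ℝ} (hτ : 0 < τ) (hX : 0 < X)
    (hρ : NiceDensity ρ) (hxρ : xA ρ ≤ X) (hW : 0 ≤ W)
    (hEL : ∀ w ∈ testFun X, ∫ x in (0:ℝ)..X, ρ x * w x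
      ≤ √W / τ * √(∫ x in Ioo 0 X, (prim w x)^2 * ρ x)) :
    (∃ C : ℝ, ∀ᵐ x : ℝ, 0 < x → |ρ x| ≤ C) ∧
    ∃ ρb g : ℝ → ℝ,
      ContRep X ρ ρb ∧
      (∀ x ∈ Icc 0 X, ρb x = ρb 0 + ∫ s in (0:ℝ)..x, g s) ∧
      IntegrableOn (fun x => (g x)^2) (Ioo 0 X) volume ∧
      (∫ x in (0:ℝ)..X, (g x)^2)
        ≤ (eLpNormEssSup ρ (volume.restrict (Ioo 0 X))).toReal * W / τ^2 ∧
      (∫ x in (0:ℝ)..X, |g x|)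
        ≤ Real.sqrt X * Real.sqrt (eLpNormEssSup ρ (volume.restrict (Ioo 0 X))).toReal
            * Real.sqrt W / τ := by
  obtain ⟨h, hhm, hi1, hi2, hle, c, hc⟩ := exists_log_deriv hX hρ.meas hρ.nonneg
    (hρ.integrableOn X) (div_nonneg (Real.sqrt_nonneg W) hτ.le) hEL
  set g : ℝ → ℝ := fun s => h s * ρ s with hg
  have hgm : Measurable g := hhm.mul hρ.meas
  have hcont : ContinuousOn (fun x => c + prim g x) (Icc 0 X) := by
    refine continuousOn_const.add ?_
    have h1 : IntegrableOn g (uIcc 0 X) := by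
      rw [uIcc_of_le hX.le]
      rw [integrableOn_Icc_iff_integrableOn_Ioo]
      exact hi1
    have := intervalIntegral.continuousOn_primitive_interval h1
    rwa [uIcc_of_le hX.le] at this
  obtain ⟨B, hB⟩ := isCompact_Icc.exists_bound_of_continuousOn hcont
  have hbd : ∀ᵐ x : ℝ, x ∈ Ioo 0 X → |ρ x| ≤ B := by
    filter_upwards [hc] with x hx hx'
    rw [hx hx']
    exact hB x ⟨hx'.1.le, hx'.2.le⟩
  have hbd' : ∀ᵐ x ∂(volume.restrict (Ioo 0 X)), ‖ρ x‖ ≤ B :=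
    (ae_restrict_iff' measurableSet_Ioo).2 hbd
  set K := (eLpNormEssSup ρ (volume.restrict (Ioo 0 X))).toReal with hK
  have hKfin : eLpNormEssSup ρ (volume.restrict (Ioo 0 X)) ≠ ⊤ :=
    (eLpNormEssSup_lt_top_of_ae_bound hbd').ne
  have hρK : ∀ᵐ x ∂(volume.restrict (Ioo 0 X)), ρ x ≤ K := by
    filter_upwards [enorm_ae_le_eLpNormEssSup ρ (volume.restrict (Ioo 0 X))] with x hx
    have h1 := ENNReal.toReal_mono hKfin hx
    rw [toReal_enorm] at h1
    exact (le_abs_self _).trans h1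
  have hgK : ∀ᵐ x ∂(volume.restrict (Ioo 0 X)), (g x)^2 ≤ K * (h x^2 * ρ x) := by
    filter_upwards [hρK] with x hx
    have h1 : 0 ≤ h x^2 * ρ x := mul_nonneg (sq_nonneg _) (hρ.nonneg x)
    calc (g x)^2 = ρ x * (h x^2 * ρ x) := by rw [hg]; ring
      _ ≤ _ := mul_le_mul_of_nonneg_right hx h1
  have hgi : IntegrableOn (fun x => (g x)^2) (Ioo 0 X) := by
    refine Integrable.mono' (hi2.const_mul K) (hgm.pow_const 2).aestronglyMeasurable ?_
    filter_upwards [hgK] with x hx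
    rwa [Real.norm_eq_abs, abs_of_nonneg (sq_nonneg _)]
  have hGle : ∫ x in Ioo 0 X, (g x)^2 ≤ K * W / τ^2 := by
    calc ∫ x in Ioo 0 X, (g x)^2 ≤ ∫ x in Ioo 0 X, K * (h x^2 * ρ x) :=
          integral_mono_ae hgi (hi2.const_mul K) hgK
      _ = K * ∫ x in Ioo 0 X, h x^2 * ρ x := integral_const_mul _ _
      _ ≤ K * (√W / τ)^2 := mul_le_mul_of_nonneg_left hle ENNReal.toReal_nonneg
      _ = K * W / τ^2 := by rw [div_pow, Real.sq_sqrt hW]; ring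
  have hiv : ∀ f : ℝ → ℝ, ∫ x in (0:ℝ)..X, f x = ∫ x in Ioo 0 X, f x := fun f => by
    rw [intervalIntegral.integral_of_le hX.le, integral_Ioc_eq_integral_Ioo]
  refine ⟨⟨max B 1, ?_⟩, fun x => c + prim g x, g, ⟨hcont, hc⟩, ?_, hgi, ?_, ?_⟩
  · have hX' : ∀ᵐ x : ℝ, x ≠ X := by simp [ae_iff, measure_singleton]
    filter_upwards [hbd, xA_spec hρ.one, hX'] with x h1 h2 h3 hx
    rcases lt_or_gt_of_ne h3 with h4 | h4
    · exact (h1 ⟨hx, h4⟩).trans (le_max_left _ _)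
    · rw [h2 (lt_of_le_of_lt hxρ h4), abs_one]
      exact le_max_right _ _
  · intro x _
    simp [prim]
  · rw [hiv]; exact hGle
  · rw [hiv]
    have hia : IntegrableOn (fun x => |g x|) (Ioo 0 X) := hi1.abs
    have h1 : ∫ x in Ioo 0 X, |g x| ≤ √X * √(∫ x in Ioo 0 X, (g x)^2) := by
      refine amgm_optimize hX.le (integral_nonneg fun _ => sq_nonneg _) fun s hs => ?_
      have hcst : IntegrableOn (fun _ : ℝ => s) (Ioo 0 X) := by simp
      calc 2 * ∫ x in Ioo 0 X, |g x| = ∫ x in Ioo 0 X, 2 * |g x| := (integral_const_mul _ _).symm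
        _ ≤ ∫ x in Ioo 0 X, (s + (g x)^2 / s) := by
          refine integral_mono (hia.const_mul 2) (hcst.add (hgi.div_const s)) fun x => ?_
          have h2 : 0 ≤ (s - |g x|)^2 / s := by positivity
          have h3 : (s - |g x|)^2 / s = s - 2 * |g x| + (g x)^2 / s := by
            rw [← sq_abs (g x)]
            field_simp
            ring
          show 2 * |g x| ≤ s + (g x)^2 / s
          linarith
        _ = s * X + (∫ x in Ioo 0 X, (g x)^2) / s := by
          rw [integral_add hcst (hgi.div_const s), integral_div]
          simp [hX.le, mul_comm]
    refine h1.trans ?_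
    have h4 : √(∫ x in Ioo 0 X, (g x)^2) ≤ √K * √W / τ := by
      refine (Real.sqrt_le_sqrt hGle).trans_eq ?_
      rw [Real.sqrt_div' _ (sq_nonneg τ), Real.sqrt_sq hτ.le, Real.sqrt_mul ENNReal.toReal_nonneg]
    calc √X * √(∫ x in Ioo 0 X, (g x)^2) ≤ √X * (√K * √W / τ) := by gcongr
      _ = _ := by ring

/-! ### A spike with non-integrable entropy -/

/-- The profile `2 / (x ln² x)`: integrable near `0⁺`, while `spike · ln spike` is not. -/
def spike (x : ℝ) : ℝ := 2 / (x * Real.log x ^ 2)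

lemma spike_measurable : Measurable spike := by
  unfold spike
  fun_prop

lemma spike_nonneg {x : ℝ} (hx : 0 ≤ x) : 0 ≤ spike x := by
  unfold spike; positivity

lemma one_le_spike {x : ℝ} (h0 : 0 < x) (h1 : x < 1) : 1 ≤ spike x := by
  have hl : Real.log x < 0 := Real.log_neg h0 h1
  have h2 := Real.quadratic_le_exp_of_nonneg (x := -Real.log x) (by linarith)
  rw [Real.exp_neg, Real.exp_log h0] at h2
  unfold spike
  rw [one_le_div (by have := hl.ne; positivity)]
  have h3 : Real.log x ^ 2 / 2 ≤ x⁻¹ := by nlinarith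
  calc x * Real.log x ^ 2 = 2 * (x * (Real.log x ^ 2 / 2)) := by ring
    _ ≤ 2 * (x * x⁻¹) := by gcongr
    _ = 2 := by rw [mul_inv_cancel₀ h0.ne', mul_one]

lemma spike_integrableOn {η : ℝ} (h1 : η < 1) : IntegrableOn spike (Ioc 0 η) := by
  have hl : ∀ x ∈ Ioc 0 η, Real.log x < 0 := fun x hx =>
    Real.log_neg hx.1 (lt_of_le_of_lt hx.2 h1)
  -- the antiderivative `-2 / ln x` extends continuously by `0` (the junk value of `ln`) to `x = 0`
  refine intervalIntegral.integrableOn_deriv_of_nonneg (g := fun x => -2 / Real.log x) ?_ ?_ ?_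
  · intro x hx
    rcases hx.1.eq_or_lt with h | h
    · rw [← h]
      refine ContinuousAt.continuousWithinAt ?_
      have : Tendsto (fun x : ℝ => -2 / Real.log x) (𝓝[≠] 0) (𝓝 0) :=
        tendsto_const_nhds.div_atBot Real.tendsto_log_nhdsNE_zero
      refine continuousAt_iff_punctured_nhds.2 ?_
      simpa using this
    · exact (continuousAt_const.div (Real.continuousAt_log h.ne')
        (hl x ⟨h, hx.2⟩).ne).continuousWithinAt
  · intro x hx
    have h2 := (hl x ⟨hx.1, hx.2.le⟩).ne
    have h3 := (hasDerivAt_const x (-2:ℝ)).div (Real.hasDerivAt_log hx.1.ne') h2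
    have h4 : spike x = (0 * Real.log x - -2 * x⁻¹) / Real.log x ^ 2 := by
      unfold spike
      have := hx.1.ne'
      field_simp
      ring
    rw [h4]
    exact h3
  · intro x hx
    exact spike_nonneg hx.1.le

lemma spike_mul_log_not_integrableOn {η : ℝ} (h0 : 0 < η) :
    ¬ IntegrableOn (fun x => spike x * Real.log (spike x)) (Ioo 0 η) := by
  have hlog : Tendsto Real.log (𝓝[>] 0) atBot := Real.tendsto_log_nhdsGT_zero
  have hev : ∀ᶠ x in 𝓝[>] (0:ℝ), 0 < x ∧ Real.log x ≤ -4 := by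
    filter_upwards [self_mem_nhdsWithin, hlog.eventually (eventually_le_atBot (-4))] with x h1 h2
      using ⟨h1, h2⟩
  have hder : ∀ x : ℝ, 0 < x → Real.log x ≤ -4 →
      HasDerivAt (fun x => Real.log (Real.log x)) (x⁻¹ / Real.log x) x := fun x hx hl =>
    (Real.hasDerivAt_log hx.ne').log (by linarith)
  refine not_integrableOn_of_tendsto_norm_atTop_of_deriv_isBigO_filter (l := 𝓝[>] (0:ℝ))
    (f := fun x => Real.log (Real.log x)) (Ioo_mem_nhdsGT h0) ?_ ?_ ?_
  · filter_upwards [hev] with x hx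
    exact (hder x hx.1 hx.2).differentiableAt
  · refine tendsto_norm_atTop_atTop.comp ?_
    have h2 : Tendsto (fun x : ℝ => Real.log (-Real.log x)) (𝓝[>] 0) atTop :=
      Real.tendsto_log_atTop.comp (tendsto_neg_atBot_atTop.comp hlog)
    simpa only [Real.log_neg_eq_log] using h2
  · refine Asymptotics.IsBigO.of_bound 2 ?_
    filter_upwards [hev] with x hx
    obtain ⟨hx0, hx4⟩ := hx
    rw [(hder x hx0 hx4).deriv]
    set t := -Real.log x with ht
    have hlt : Real.log x = -t := by rw [ht]; ring
    have ht4 : 4 ≤ t := by linarith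
    have hsp : spike x = 2 / (x * t^2) := by rw [spike, hlt]; ring
    have hlogsp : Real.log (spike x) = Real.log 2 + t - 2 * Real.log t := by
      rw [hsp, Real.log_div (by norm_num) (by positivity), Real.log_mul hx0.ne' (by positivity),
        Real.log_pow, hlt]
      push_cast; ring
    have h3 := Real.log_le_sub_one_of_pos (show 0 < t / 4 by linarith)
    rw [Real.log_div (by linarith) (by norm_num), show (4:ℝ) = 2^2 by norm_num, Real.log_pow] at h3
    have h4 : Real.log 2 ≤ 1 := by linarith [Real.log_two_lt_d9]
    push_cast at h3
    have h5 : t / 4 ≤ Real.log (spike x) := by rw [hlogsp]; linarith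
    have h6 : 0 < spike x := by rw [hsp]; positivity
    rw [Real.norm_eq_abs, Real.norm_eq_abs, abs_of_nonneg (mul_nonneg h6.le (by linarith)), hlt,
      abs_div, abs_neg, abs_of_pos (inv_pos.2 hx0), abs_of_pos (show 0 < t by linarith)]
    calc x⁻¹ / t = 2 * (spike x * (t / 4)) := by
          rw [hsp]; field_simp; norm_num
      _ ≤ _ := by gcongr

lemma exists_spike_small {ε a : ℝ} (hε : 0 < ε) (ha : 0 < a) :
    ∃ η, 0 < η ∧ η < 1 ∧ η ≤ a ∧ ∫ x in Ioo 0 η, spike x < ε := by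
  have h1 : IntegrableOn spike (uIcc 0 (1/2 : ℝ)) := by
    rw [uIcc_of_le (by norm_num), integrableOn_Icc_iff_integrableOn_Ioc]
    exact spike_integrableOn (by norm_num)
  have h2 := intervalIntegral.continuousOn_primitive_interval h1 0 (by simp)
  rw [uIcc_of_le (by norm_num)] at h2
  have h3 : Tendsto (fun x => ∫ t in (0:ℝ)..x, spike t) (𝓝[>] 0) (𝓝 0) := by
    have h4 := h2.tendsto
    simp only [intervalIntegral.integral_same] at h4
    refine h4.mono_left ?_
    rw [← nhdsWithin_Ioc_eq_nhdsGT (show (0:ℝ) < 1/2 by norm_num)]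
    exact nhdsWithin_mono _ Ioc_subset_Icc_self
  obtain ⟨η, hη⟩ := ((h3.eventually (gt_mem_nhds hε)).and
    (Ioo_mem_nhdsGT (show (0:ℝ) < min a 1 from lt_min ha one_pos))).exists
  refine ⟨η, hη.2.1, lt_of_lt_of_le hη.2.2 (min_le_right _ _),
    hη.2.2.le.trans (min_le_left _ _), ?_⟩
  have := hη.1
  rwa [intervalIntegral.integral_of_le hη.2.1.le, integral_Ioc_eq_integral_Ioo] at this

lemma fEnt_eq (β r : ℝ) : fEnt β r = r * Real.log r - β * r + β := by unfold fEnt; ring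

lemma fEnt_continuous (β : ℝ) : Continuous (fEnt β) := by
  have : fEnt β = fun r => r * Real.log r - β * r + β := funext (fEnt_eq β)
  rw [this]
  have := Real.continuous_mul_log
  fun_prop

/-- The entropy controls the density. -/
lemma le_fEnt_add (β : ℝ) {r : ℝ} (hr : 0 ≤ r) : r ≤ fEnt β r + (Real.exp β - β) := by
  rcases hr.eq_or_lt with h | h
  · rw [← h]; unfold fEnt; simp [Real.exp_nonneg]
  · have h1 := Real.log_le_sub_one_of_pos (show 0 < Real.exp β / r by positivity)
    rw [Real.log_div (Real.exp_pos _).ne' h.ne', Real.log_exp] at h1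
    have h2 := mul_le_mul_of_nonneg_left h1 h.le
    have h3 : r * (Real.exp β / r - 1) = Real.exp β - r := by field_simp
    unfold fEnt
    nlinarith

lemma fEnt_integrableOn_of_bdd {β M : ℝ} {ρ : ℝ → ℝ} {s : Set ℝ} (hm : Measurable ρ)
    (hs : MeasurableSet s) (hfin : volume s ≠ ⊤) (hb : ∀ x ∈ s, ρ x ∈ Icc 0 M) :
    IntegrableOn (fun x => fEnt β (ρ x)) s := by
  obtain ⟨B, hB⟩ := isCompact_Icc.exists_bound_of_continuousOn (s := Icc 0 M)
    (fEnt_continuous β).continuousOn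
  refine Measure.integrableOn_of_bounded hfin
    ((fEnt_continuous β).measurable.comp hm).aestronglyMeasurable (M := B) ?_
  filter_upwards [ae_restrict_mem hs] with x hx using hB _ (hb x hx)

lemma NiceDensity.memAdm {σ : ℝ → ℝ} {β : ℝ} (h : NiceDensity σ)
    (hf : LocallyIntegrableOn (fun x => fEnt β (σ x)) (Ioi 0)) : MemAdm σ := by
  have h1 : LocallyIntegrableOn σ (Ioi 0) := by
    have h2 : LocallyIntegrableOn (fun x => 1 - (1 - σ x)) (Ioi 0) :=
      (locallyIntegrableOn_const 1).sub h.int.locallyIntegrableOn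
    simpa using h2
  refine ⟨Eventually.of_forall fun x _ => h.nonneg x, h1, ?_, h.one⟩
  have h3 : LocallyIntegrableOn (fun x => fEnt β (σ x) + β * σ x - β) (Ioi 0) :=
    (hf.add (h1.smul β)).sub (locallyIntegrableOn_const β)
  have : (fun x => σ x * Real.log (σ x)) = fun x => fEnt β (σ x) + β * σ x - β := by
    funext x; rw [fEnt_eq]; ring
  rwa [this]

/-! ### Spiked competitors and vanishing distance -/

/-- Admissible densities arbitrarily close to `r` in mass and transport distance whose entropy
density is not integrable, so that the Bochner integral in the energy takes the value `0`. -/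
lemma exists_spiked {β : ℝ} {r : ℝ → ℝ} (hr : NiceDensity r) (hr1 : ∀ x, 0 < x → r x ≤ 1)
    (hx : 0 < xA r) {ε : ℝ} (hε : 0 < ε) :
    ∃ σ, MemAdm σ ∧ xA σ ≤ xA r ∧ ∫ x in Ioi (0:ℝ), fEnt β (σ x) = 0 ∧
      0 ≤ Mdiff σ r ∧ Mdiff σ r ≤ ε ∧ W2sq σ r ≤ ε := by
  obtain ⟨η, hη0, hη1, hηx, hηε⟩ := exists_spike_small hε hx
  set m := ∫ x in Ioo 0 η, spike x with hm
  have hm0 : 0 ≤ m := setIntegral_nonneg measurableSet_Ioo fun x hx => spike_nonneg hx.1.le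
  have hsi : IntegrableOn spike (Ioo 0 η) :=
    (spike_integrableOn hη1).mono_set Ioo_subset_Ioc_self
  set b : ℝ → ℝ := (Ioo 0 η).indicator spike with hb
  have hbm : Measurable b := spike_measurable.indicator measurableSet_Ioo
  have hb0 : ∀ x, 0 ≤ b x := indicator_nonneg fun x hx => spike_nonneg hx.1.le
  have hbi : Integrable b := (integrable_indicator_iff measurableSet_Ioo).2 hsi
  have hbe : ∀ x, η ≤ x → b x = 0 := fun x hx =>
    indicator_of_notMem (fun h => absurd h.2 (not_lt.2 hx)) _
  set σ : ℝ → ℝ := fun x => r x + b x with hσ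
  have hσn : NiceDensity σ := by
    refine ⟨hr.meas.add hbm, fun x => add_nonneg (hr.nonneg x) (hb0 x), ?_, ?_⟩
    · obtain ⟨y, hy, hy1⟩ := hr.one
      refine ⟨max y η, lt_max_of_lt_left hy, ?_⟩
      filter_upwards [hy1] with x hx hx'
      rw [hσ]
      simp only
      rw [hx (mem_Ioi.2 (lt_of_le_of_lt (le_max_left y η) hx')),
        hbe x ((le_max_right y η).trans (le_of_lt hx')), add_zero]
    · refine (hr.int.sub hbi.integrableOn).congr (Eventually.of_forall fun x => ?_)
      simp only [Pi.sub_apply, hσ]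
      ring
  have hxσ : xA σ ≤ xA r := by
    refine xA_le hx.le ?_
    filter_upwards [xA_spec hr.one] with y hy hy'
    rw [hσ]
    simp only
    rw [hy hy', hbe y (hηx.trans (le_of_lt hy')), add_zero]
  have hM : Mdiff σ r = m := by
    have h1 : ∫ x in Ioi (0:ℝ), (1 - σ x) = (∫ x in Ioi (0:ℝ), (1 - r x)) - m := by
      have h2 : ∀ x, 1 - σ x = (1 - r x) - b x := fun x => by simp only [hσ]; ring
      simp only [h2]
      rw [integral_sub hr.int hbi.integrableOn, hb, setIntegral_indicator measurableSet_Ioo,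
        inter_eq_right.2 (Ioo_subset_Ioi_self : Ioo 0 η ⊆ Ioi 0)]
    rw [Mdiff, Mfun, Mfun, h1]
    ring
  have hM' : Mdiff r σ = -m := by rw [← hM]; unfold Mdiff; ring
  refine ⟨σ, ?_, hxσ, ?_, by rw [hM]; exact hm0, by rw [hM]; exact hηε.le, ?_⟩
  · refine hσn.memAdm (β := β) ((locallyIntegrableOn_iff isOpen_Ioi.isLocallyClosed).2 ?_)
    intro k hk hkc
    -- on compact subsets of `(0, ∞)` the density is bounded
    have h1 : ContinuousOn spike (k ∩ Icc 0 η) := by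
      intro x hx
      have h0 : 0 < x := hk hx.1
      have hl : Real.log x ≠ 0 := (Real.log_neg h0 (lt_of_le_of_lt hx.2.2 hη1)).ne
      refine ContinuousAt.continuousWithinAt ?_
      unfold spike
      exact continuousAt_const.div (continuousAt_id.mul ((Real.continuousAt_log h0.ne').pow 2))
        (mul_ne_zero h0.ne' (pow_ne_zero 2 hl))
    obtain ⟨B, hB⟩ := (hkc.inter_right isClosed_Icc).exists_bound_of_continuousOn h1
    refine fEnt_integrableOn_of_bdd (M := 1 + max B 0) hσn.meas hkc.measurableSet
      hkc.measure_lt_top.ne fun x hx => ⟨hσn.nonneg x, add_le_add (hr1 x (hk hx)) ?_⟩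
    by_cases hxη : x ∈ Ioo 0 η
    · rw [hb, indicator_of_mem hxη]
      exact ((le_abs_self _).trans (hB x ⟨hx, hxη.1.le, hxη.2.le⟩)).trans (le_max_left _ _)
    · rw [hb, indicator_of_notMem hxη]
      exact le_max_right _ _
  · refine integral_undef fun hint => spike_mul_log_not_integrableOn hη0 ?_
    have h1 : IntegrableOn (fun x => fEnt β (σ x)) (Ioo 0 η) :=
      IntegrableOn.mono_set hint Ioo_subset_Ioi_self
    have h2 : IntegrableOn (fun x => fEnt β (σ x) + β * σ x - β) (Ioo 0 η) :=
      (h1.add ((hσn.integrableOn η).const_mul β)).sub (by simp)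
    refine Integrable.mono' h2
      (spike_measurable.mul spike_measurable.log).aestronglyMeasurable ?_
    filter_upwards [ae_restrict_mem measurableSet_Ioo] with x hx
    have h3 : 1 ≤ spike x := one_le_spike hx.1 (hx.2.trans hη1)
    have h4 : spike x ≤ σ x := by
      rw [hσ, hb]
      simp only
      rw [indicator_of_mem hx]
      linarith [hr.nonneg x]
    have h5 : fEnt β (σ x) + β * σ x - β = σ x * Real.log (σ x) := by rw [fEnt_eq]; ring
    rw [h5, Real.norm_eq_abs, abs_of_nonneg (mul_nonneg (by linarith) (Real.log_nonneg h3))]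
    exact mul_le_mul h4 (Real.log_le_log (by linarith) h4) (Real.log_nonneg h3) (by linarith)
  · set L := xA r with hL
    set μ : Measure ℝ := (volume.restrict (Ioo 0 η)).withDensity
      (fun x => ENNReal.ofReal (spike x)) with hμ
    have hμu : μ univ = ENNReal.ofReal m := by
      rw [hμ, withDensity_apply _ MeasurableSet.univ, Measure.restrict_univ,
        ← ofReal_integral_eq_lintegral_ofReal hsi]
      filter_upwards [ae_restrict_mem measurableSet_Ioo] with x hx using spike_nonneg hx.1.le
    have hμfin : IsFiniteMeasure μ := ⟨by rw [hμu]; exact ENNReal.ofReal_lt_top⟩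
    have hμ0 : ∀ᵐ x ∂μ, x ∈ Ioo 0 η :=
      (withDensity_absolutelyContinuous _ _).ae_le (ae_restrict_mem measurableSet_Ioo)
    have hdens : densMeas σ L = densMeas r L + μ := by
      have h1 : (fun x => ENNReal.ofReal (σ x))
          = (fun x => ENNReal.ofReal (r x)) + fun x => ENNReal.ofReal (b x) := by
        funext x
        simp only [hσ, Pi.add_apply]
        rw [ENNReal.ofReal_add (hr.nonneg x) (hb0 x)]
      have h2 : (fun x => ENNReal.ofReal (b x))
          = (Ioo 0 η).indicator fun x => ENNReal.ofReal (spike x) := by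
        funext x
        by_cases hx : x ∈ Ioo 0 η <;> simp [hb, hx]
      rw [densMeas, h1, withDensity_add_left hr.meas.ennreal_ofReal, h2,
        withDensity_indicator measurableSet_Ioo, Measure.restrict_restrict measurableSet_Ioo,
        inter_eq_left.2 (Ioo_subset_Ioo_right hηx), densMeas]
    have hdfin : IsFiniteMeasure (densMeas r L) :=
      ⟨by rw [hr.densMeas_univ]; exact ENNReal.ofReal_lt_top⟩
    have hdm : Measurable (fun x : ℝ => (x, x)) := by fun_prop
    have hzm : Measurable (fun x : ℝ => (x, (0:ℝ))) := by fun_prop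
    -- the excess mass is taken from the reservoir at the origin
    set γ := (densMeas r L).map (fun x => (x, x)) + μ.map (fun x => (x, (0:ℝ))) with hγ
    have hcpl : IsCpl γ σ r := by
      constructor
      · rw [hγ, Measure.map_add _ _ measurable_fst, Measure.map_map measurable_fst hdm,
          Measure.map_map measurable_fst hzm, nuMeas_eq, max_eq_right hxσ, hM',
          ENNReal.ofReal_of_nonpos (by linarith), hdens]
        simp [Function.comp_def]
      · rw [hγ, Measure.map_add _ _ measurable_snd, Measure.map_map measurable_snd hdm,
          Measure.map_map measurable_snd hzm, nuMeas_eq, max_eq_left hxσ, hM]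
        simp only [Function.comp_def, Measure.map_id', Measure.map_const, hμu]
    refine hcpl.W2sq_le.trans ?_
    have hi1 : ∀ᵐ p ∂((densMeas r L).map (fun x => (x, x))), (p.1 - p.2)^2 = 0 := by
      rw [ae_map_iff hdm.aemeasurable (measurableSet_eq_fun (by fun_prop) (by fun_prop))]
      exact Eventually.of_forall fun x => by simp
    have hi2 : ∀ᵐ p ∂(μ.map (fun x => (x, (0:ℝ)))), ‖(p.1 - p.2)^2‖ ≤ 1 := by
      rw [ae_map_iff hzm.aemeasurable (measurableSet_le (by fun_prop) (by fun_prop))]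
      filter_upwards [hμ0] with x hx
      rw [sub_zero, Real.norm_eq_abs, abs_of_nonneg (sq_nonneg _)]
      nlinarith [hx.1, hx.2]
    have hint1 : Integrable (fun p : ℝ × ℝ => (p.1 - p.2)^2)
        ((densMeas r L).map (fun x => (x, x))) :=
      (integrable_zero _ _ _).congr (hi1.mono fun p hp => hp.symm)
    have hint2 : Integrable (fun p : ℝ × ℝ => (p.1 - p.2)^2) (μ.map (fun x => (x, (0:ℝ)))) :=
      Integrable.of_bound (by fun_prop) 1 hi2
    rw [hγ, integral_add_measure hint1 hint2, integral_congr_ae hi1]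
    have h3 := norm_integral_le_of_norm_le_const hi2
    have h4 : (μ.map (fun x => (x, (0:ℝ)))).real univ = m := by
      rw [measureReal_def, Measure.map_apply hzm MeasurableSet.univ, preimage_univ, hμu,
        ENNReal.toReal_ofReal hm0]
    rw [h4, one_mul] at h3
    simp only [integral_zero, zero_add]
    exact (le_abs_self _).trans (h3.trans hηε.le)

/-- Vanishing distance at equal mass forces the densities to agree, since the characteristic
functions of both marginals then coincide. -/
lemma ae_eq_of_W2sq_eq_zero {ρ r : ℝ → ℝ} (hρ : NiceDensity ρ) (hr : NiceDensity r)
    (hM : Mdiff ρ r = 0) (hW : W2sq ρ r = 0) : ∀ᵐ x : ℝ, 0 < x → ρ x = r x := by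
  set L := max (xA ρ) (xA r) with hL
  have hM' : Mdiff r ρ = 0 := by unfold Mdiff at hM ⊢; linarith
  have hν1 : nuMeas ρ r = densMeas ρ L := by rw [nuMeas_eq, hM']; simp [hL]
  have hν2 : nuMeas r ρ = densMeas r L := by rw [nuMeas_eq, hM, max_comm]; simp [hL]
  have hf1 := hρ.nuMeas_finite hr
  have hf2 := hr.nuMeas_finite hρ
  have heq : nuMeas ρ r = nuMeas r ρ := by
    refine Measure.ext_of_charFun ?_
    ext t
    set D := (nuMeas ρ r).real univ with hD
    have hD0 : 0 ≤ D := measureReal_nonneg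
    have bound : ∀ δ : ℝ, 0 < δ →
        ‖charFun (nuMeas ρ r) t - charFun (nuMeas r ρ) t‖ ≤ δ * (|t| * (D + 1)) := by
      intro δ hδ
      obtain ⟨γ, hγ, hlt⟩ := exists_cpl_lt hρ hr (show 0 < δ^2 by positivity)
      have hγf := hγ.finite hρ hr
      have hγD : γ.real univ = D := by
        rw [hD, ← hγ.1, measureReal_def, measureReal_def,
          Measure.map_apply measurable_fst MeasurableSet.univ, preimage_univ]
      rw [hW, zero_add] at hlt
      have hn : ∀ y : ℝ, ‖Complex.exp (t * y * Complex.I)‖ = 1 := fun y => by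
        rw [← Complex.ofReal_mul, Complex.norm_exp_ofReal_mul_I]
      have hi1 : Integrable (fun p : ℝ × ℝ => Complex.exp (t * p.1 * Complex.I)) γ :=
        Integrable.of_bound (by fun_prop) 1 (Eventually.of_forall fun p => (hn p.1).le)
      have hi2 : Integrable (fun p : ℝ × ℝ => Complex.exp (t * p.2 * Complex.I)) γ :=
        Integrable.of_bound (by fun_prop) 1 (Eventually.of_forall fun p => (hn p.2).le)
      rw [charFun_apply_real, charFun_apply_real, ← hγ.1, ← hγ.2,
        integral_map measurable_fst.aemeasurable (by fun_prop),
        integral_map measurable_snd.aemeasurable (by fun_prop), ← integral_sub hi1 hi2]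
      have hc := hγ.integrable hρ hr
      have hg : Integrable (fun p : ℝ × ℝ => |t| * (δ + (p.1 - p.2)^2 / δ)) γ :=
        ((integrable_const δ).add (hc.div_const δ)).const_mul _
      refine (norm_integral_le_of_norm_le hg (Eventually.of_forall fun p => ?_)).trans ?_
      · have h1 : Complex.exp (t * p.1 * Complex.I) - Complex.exp (t * p.2 * Complex.I)
            = Complex.exp (t * p.2 * Complex.I)
              * (Complex.exp (Complex.I * ((t * (p.1 - p.2) : ℝ) : ℂ)) - 1) := by
          rw [mul_sub, ← Complex.exp_add, mul_one]
          congr 2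
          push_cast
          ring
        rw [h1, norm_mul, hn, one_mul]
        refine Real.norm_exp_I_mul_ofReal_sub_one_le.trans ?_
        rw [norm_mul, Real.norm_eq_abs, Real.norm_eq_abs]
        refine mul_le_mul_of_nonneg_left ?_ (abs_nonneg t)
        have h2 : 0 ≤ (δ - |p.1 - p.2|)^2 / δ := by positivity
        have h3 : (δ - |p.1 - p.2|)^2 / δ = δ - 2 * |p.1 - p.2| + (p.1 - p.2)^2 / δ := by
          rw [← sq_abs (p.1 - p.2)]
          field_simp
          ring
        linarith [abs_nonneg (p.1 - p.2)]
      · rw [integral_const_mul, integral_add (integrable_const δ) (hc.div_const δ),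
          integral_const, integral_div, hγD, smul_eq_mul]
        have h4 : (∫ p, (p.1 - p.2)^2 ∂γ) / δ ≤ δ := by
          rw [div_le_iff₀ hδ]; nlinarith
        calc |t| * (D * δ + (∫ p, (p.1 - p.2)^2 ∂γ) / δ) ≤ |t| * (D * δ + δ) := by gcongr
          _ = _ := by ring
    have h0 : ‖charFun (nuMeas ρ r) t - charFun (nuMeas r ρ) t‖ ≤ 0 := by
      refine le_of_forall_pos_le_add fun δ hδ => ?_
      have hP : 0 < |t| * (D + 1) + 1 := by positivity
      refine (bound (δ / (|t| * (D + 1) + 1)) (by positivity)).trans ?_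
      rw [zero_add, div_mul_eq_mul_div, div_le_iff₀ hP]
      nlinarith
    exact sub_eq_zero.1 (norm_le_zero_iff.1 h0)
  rw [hν1, hν2, densMeas, densMeas, withDensity_eq_iff_of_sigmaFinite
    hρ.meas.ennreal_ofReal.aemeasurable hr.meas.ennreal_ofReal.aemeasurable] at heq
  have hne : ∀ᵐ x : ℝ, x ≠ L := by simp [ae_iff, measure_singleton]
  filter_upwards [(ae_restrict_iff' measurableSet_Ioo).1 heq, xA_spec hρ.one, xA_spec hr.one, hne]
    with x h1 h2 h3 h4 hx
  rcases lt_or_gt_of_ne h4 with h5 | h5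
  · exact (ENNReal.ofReal_eq_ofReal_iff (hρ.nonneg x) (hr.nonneg x)).1 (h1 ⟨hx, h5⟩)
  · rw [h2 (mem_Ioi.2 (lt_of_le_of_lt (le_max_left _ (xA r)) h5)),
      h3 (mem_Ioi.2 (lt_of_le_of_lt (le_max_right (xA ρ) _) h5))]

/-! ### Reduction to regular data and conclusion -/

lemma fEnt_one (β : ℝ) : fEnt β 1 = 0 := by simp [fEnt]

/-- A nonnegative density that equals `1` eventually and has an integrable entropy has finite
mass deviation, by superlinearity of the entropy. -/
lemma NiceDensity.of_entropy {β : ℝ} {ρ : ℝ → ℝ} (hm : Measurable ρ) (h0 : ∀ x, 0 ≤ ρ x)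
    (h1 : ∃ x : ℝ, 0 < x ∧ (∀ᵐ y : ℝ, y ∈ Ioi x → ρ y = 1))
    (hf : IntegrableOn (fun x => fEnt β (ρ x)) (Ioi 0)) : NiceDensity ρ := by
  refine ⟨hm, h0, h1, ?_⟩
  obtain ⟨L, hL, hL1⟩ := h1
  have hA : IntegrableOn (fun x => 1 - ρ x) (Ioc 0 L) := by
    have hc : IntegrableOn (fun _ : ℝ => 1 + (Real.exp β - β)) (Ioc 0 L) := by
      simp
    have hd : IntegrableOn (fun _ : ℝ => (1:ℝ)) (Ioc 0 L) := by
      simp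
    have hfl : IntegrableOn (fun x => fEnt β (ρ x)) (Ioc 0 L) := hf.mono_set Ioc_subset_Ioi_self
    refine (hd.add (hd.add (hfl.add (hc.sub hd)))).mono'
      (measurable_const.sub hm).aestronglyMeasurable ?_
    refine Eventually.of_forall fun x => ?_
    have := le_fEnt_add β (h0 x)
    have := h0 x
    simp only [Pi.add_apply, Pi.sub_apply, Real.norm_eq_abs]
    rw [abs_le]
    constructor <;> linarith
  have hB : IntegrableOn (fun x => 1 - ρ x) (Ioi L) := by
    refine (integrableOn_zero (s := Ioi L) (μ := volume) (ε' := ℝ)).congr ?_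
    filter_upwards [ae_restrict_of_ae hL1, ae_restrict_mem measurableSet_Ioi] with x hx hx'
    simp [hx hx']
  rw [← Ioc_union_Ioi_eq_Ioi hL.le]
  exact hA.union hB

/-- On `(0, ∞)` the initial density is a bounded density with negative `Mfun`: the window condition
at the origin and `β + θ < 1` force `ρ0 < 1` near `0`. -/
lemma exists_nice_of_H2 {β θ X0 ρmin ρmax : ℝ} {ρ0 ρ0' : ℝ → ℝ} (hβθ : β + θ < 1)
    (h : H2 β θ X0 ρmin ρmax ρ0 ρ0') :
    ∃ r : ℝ → ℝ, NiceDensity r ∧ (∀ x, 0 < x → ρ0 x = r x) ∧ xA r ≤ X0 ∧ Mfun r < 0 ∧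
      0 < xA r ∧ (∀ x, 0 < x → r x ≤ 1) ∧
      IntegrableOn (fun x => fEnt β (r x)) (Ioi 0) := by
  obtain ⟨hX0, hpos, hder, -, hone, hwin, -, hbd, hmax⟩ := h
  have hcont : ContinuousOn ρ0 (Icc 0 X0) := fun x hx => (hder x hx).continuousWithinAt
  classical
  set r : ℝ → ℝ := (Icc 0 X0).piecewise ρ0 (fun _ => 1) with hrdef
  have hr_in : ∀ x ∈ Icc 0 X0, r x = ρ0 x := fun x hx => piecewise_eq_of_mem _ _ _ hx
  have hr_out : ∀ x, x ∉ Icc 0 X0 → r x = 1 := fun x hx => piecewise_eq_of_notMem _ _ _ hx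
  have hrm : Measurable r := hcont.measurable_piecewise continuousOn_const measurableSet_Icc
  have hr0 : ∀ x, 0 ≤ r x := fun x => by
    by_cases hx : x ∈ Icc 0 X0
    · rw [hr_in x hx]; exact (hpos x).le
    · rw [hr_out x hx]; exact zero_le_one
  have hrle : ∀ x, 0 < x → r x ≤ 1 := fun x hx => by
    by_cases hx' : x ∈ Icc 0 X0
    · rw [hr_in x hx']; exact (hbd x ⟨hx, hx'.2⟩).2.trans hmax
    · rw [hr_out x hx']
  have hgt : ∀ x, X0 < x → r x = 1 := fun x hx => hr_out x fun h => absurd h.2 (not_le.2 hx)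
  have heq : ∀ x, 0 < x → ρ0 x = r x := fun x hx => by
    by_cases hx' : x ∈ Icc 0 X0
    · rw [hr_in x hx']
    · rw [hr_out x hx']
      exact hone x (not_le.1 fun h => hx' ⟨hx.le, h⟩)
  have hone' : ∃ x : ℝ, 0 < x ∧ (∀ᵐ y : ℝ, y ∈ Ioi x → r y = 1) :=
    ⟨X0, hX0, Eventually.of_forall fun y hy => hgt y hy⟩
  have hf : IntegrableOn (fun x => fEnt β (r x)) (Ioi 0) := by
    rw [← Ioc_union_Ioi_eq_Ioi hX0.le]
    refine (fEnt_integrableOn_of_bdd (M := 1) hrm measurableSet_Ioc (by simp)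
      fun x hx => ⟨hr0 x, hrle x hx.1⟩).union ?_
    refine (integrableOn_zero (s := Ioi X0) (μ := volume) (ε' := ℝ)).congr_fun ?_ measurableSet_Ioi
    intro x hx
    simp only [hgt x hx, fEnt_one]
  have hnice : NiceDensity r := NiceDensity.of_entropy hrm hr0 hone' hf
  have hM : Mfun r < 0 := by
    have hlt : ρ0 0 < 1 := by
      refine lt_of_le_of_lt hwin.2 ?_
      rw [rhoPlus, Real.exp_lt_one_iff]
      linarith
    have hev : ∀ᶠ x in 𝓝[Icc 0 X0] (0:ℝ), ρ0 x < 1 :=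
      (hcont 0 ⟨le_rfl, hX0.le⟩).eventually_lt_const hlt
    rw [eventually_nhdsWithin_iff, Metric.eventually_nhds_iff] at hev
    obtain ⟨η, hη, hev⟩ := hev
    have hsub : Ioo 0 (min η X0) ⊆ Function.support (fun x => 1 - r x) ∩ Ioi 0 := by
      intro x hx
      have hxX : x ∈ Icc 0 X0 := ⟨hx.1.le, (hx.2.trans_le (min_le_right _ _)).le⟩
      have h1 : ρ0 x < 1 := hev (by
        rw [Real.dist_eq, sub_zero, abs_of_pos hx.1]
        exact hx.2.trans_le (min_le_left _ _)) hxX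
      refine ⟨?_, hx.1⟩
      rw [Function.mem_support, hr_in x hxX]
      linarith
    have : 0 < ∫ x in Ioi (0:ℝ), (1 - r x) := by
      rw [setIntegral_pos_iff_support_of_nonneg_ae _ hnice.int]
      · refine lt_of_lt_of_le ?_ (measure_mono hsub)
        rw [Real.volume_Ioo, ENNReal.ofReal_pos]
        simpa using ⟨hη, hX0⟩
      · filter_upwards [ae_restrict_mem measurableSet_Ioi] with x hx
        simpa using hrle x hx
    rw [Mfun]
    linarith
  refine ⟨r, hnice, heq, xA_le hX0.le (Eventually.of_forall fun y hy => hgt y hy), hM, ?_, hrle, hf⟩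
  refine lt_of_le_of_ne (xA_nonneg r) fun h0 => ?_
  have h1 := hnice.Mfun_eq (L := 0) h0.ge
  simp at h1
  exact hM.ne h1

/-- An admissible density agrees a.e. on `(0, ∞)` with a measurable, everywhere nonnegative one. -/
lemma MemAdm.exists_measurable {ρ : ℝ → ℝ} (h : MemAdm ρ) :
    ∃ σ : ℝ → ℝ, Measurable σ ∧ (∀ x, 0 ≤ σ x) ∧ ∀ᵐ x : ℝ, 0 < x → ρ x = σ x := by
  have hm : AEStronglyMeasurable ρ (volume.restrict (Ioi 0)) := h.2.1.aestronglyMeasurable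
  refine ⟨fun x => max (hm.mk ρ x) 0, hm.stronglyMeasurable_mk.measurable.max measurable_const,
    fun x => le_max_right _ _, ?_⟩
  filter_upwards [(ae_restrict_iff' measurableSet_Ioi).1 hm.ae_eq_mk, h.1] with x hx hx0 hxp
  rw [← hx hxp, max_eq_left (hx0 hxp)]

lemma MemAdm.eventually_one_congr {ρ σ : ℝ → ℝ} (h : MemAdm ρ) (he : ∀ᵐ x : ℝ, 0 < x → ρ x = σ x) :
    ∃ x : ℝ, 0 < x ∧ (∀ᵐ y : ℝ, y ∈ Ioi x → σ y = 1) := by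
  obtain ⟨x, hx, h1⟩ := h.2.2.2
  refine ⟨x, hx, ?_⟩
  filter_upwards [h1, he] with y hy hy' hyx
  rw [← hy' (hx.trans hyx), hy hyx]

lemma ptau_nonneg {Kτ mτ m : ℝ} (hK : 0 < Kτ) : 0 ≤ ptau Kτ mτ m := by
  unfold ptau; positivity

lemma ptau_of_nonneg {Kτ mτ m : ℝ} (hm : 0 < mτ) (h : 0 ≤ m) : ptau Kτ mτ m = 0 := by
  rw [ptau, max_eq_right (by linarith)]; simp

/-- A minimizer has an integrable entropy. Otherwise the Bochner integral of its entropy has the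
value `0`, as it does for the spiked competitors of `exists_spiked`, whose distance to `r` and
mass defect are arbitrarily small; minimality then forces the minimizer to be `r`, whose entropy is
integrable. -/
lemma entropy_integrable_of_min {lam α β θ τ Kτ mτ X0 X : ℝ} {ρ r : ℝ → ℝ} (hθ : 0 < θ)
    (hτ : 0 < τ) (hmτ : 0 < mτ) (hKτ : 0 < Kτ) (hρm : Measurable ρ) (hρ0 : ∀ x, 0 ≤ ρ x)
    (hρ1 : ∃ x : ℝ, 0 < x ∧ (∀ᵐ y : ℝ, y ∈ Ioi x → ρ y = 1)) (hr : NiceDensity r)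
    (hxr : xA r ≤ X) (hxr0 : 0 < xA r) (hM : Mfun r < 0) (hr1 : ∀ x, 0 < x → r x ≤ 1)
    (hfr : IntegrableOn (fun x => fEnt β (r x)) (Ioi 0))
    (hmin : ∀ σ, MemAdm σ → xA σ ≤ X →
      Jfun lam α β θ τ Kτ mτ X0 r X ρ ≤ Jfun lam α β θ τ Kτ mτ X0 r X σ) :
    IntegrableOn (fun x => fEnt β (ρ x)) (Ioi 0) := by
  by_contra hnot
  have h0 : ∫ x in Ioi (0:ℝ), fEnt β (ρ x) = 0 := integral_undef hnot
  have hWn := W2sq_nonneg ρ r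
  have key : ∀ ε > 0, W2sq ρ r / (2 * τ) + θ * |Mdiff ρ r| ≤ (1 / (2 * τ) + θ) * ε := by
    intro ε hε
    obtain ⟨σ, hσ, hxσ, hfσ, hMσ0, hMσ, hWσ⟩ := exists_spiked (β := β) hr hr1 hxr0 hε
    have h1 := hmin σ hσ (hxσ.trans hxr)
    unfold Jfun dsq Efun at h1
    rw [h0, hfσ, ptau_of_nonneg hmτ hMσ0, abs_of_nonneg hMσ0, add_div, add_div] at h1
    have h2 := ptau_nonneg (mτ := mτ) (m := Mdiff ρ r) hKτ
    have h3 : θ * Mdiff σ r ≤ θ * ε := mul_le_mul_of_nonneg_left hMσ hθ.le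
    have h4 : W2sq σ r / (2 * τ) ≤ ε / (2 * τ) := by gcongr
    have h5 : (1 / (2 * τ) + θ) * ε = ε / (2 * τ) + θ * ε := by ring
    linarith
  have hle : W2sq ρ r / (2 * τ) + θ * |Mdiff ρ r| ≤ 0 := by
    refine le_of_forall_pos_le_add fun ε hε => ?_
    have hc : 0 < 1 / (2 * τ) + θ := by positivity
    have := key (ε / (1 / (2 * τ) + θ)) (by positivity)
    rwa [mul_div_cancel₀ _ hc.ne', ← zero_add ε] at this
  have hW1 : 0 ≤ W2sq ρ r / (2 * τ) := by positivity
  have hM1 : 0 ≤ θ * |Mdiff ρ r| := by positivity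
  have hW0 : W2sq ρ r = 0 := by
    have : W2sq ρ r / (2 * τ) = 0 := by linarith
    have h2τ : (2 * τ) ≠ 0 := by positivity
    simpa [h2τ, hτ.ne'] using this
  have hM0 : Mdiff ρ r = 0 := by
    have : θ * |Mdiff ρ r| = 0 := by linarith
    simpa [hθ.ne'] using this
  by_cases hi : IntegrableOn (fun x => 1 - ρ x) (Ioi 0)
  · have hae := ae_eq_of_W2sq_eq_zero ⟨hρm, hρ0, hρ1, hi⟩ hr hM0 hW0
    refine hnot (hfr.congr ?_)
    filter_upwards [ae_restrict_of_ae hae, ae_restrict_mem measurableSet_Ioi] with x hx hx'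
    rw [hx hx']
  · have : Mfun ρ = 0 := by rw [Mfun, integral_undef hi, neg_zero]
    rw [Mdiff, this] at hM0
    linarith

/-- Corollary 3.2. A minimizer `(X, ρ)` of the JKO functional with
`X ≥ X⁰` satisfies: `ρ ∈ L^∞(ℝ₊)`; the restriction of `ρ` to `(0,X)` belongs to
`H¹(0,X)` (so `ρ` has a continuous representative `ρ̄` on `[0,X]`, given by the
fundamental theorem of calculus with a square-integrable weak derivative `g`); and
`∫₀^X |ρ'|² ≤ ‖ρ‖_{L^∞(0,X)} 𝐖₂²(ρ,ρ⁰)/τ²`,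
`∫₀^X |ρ'| ≤ X^{1/2} ‖ρ‖^{1/2}_{L^∞(0,X)} 𝐖₂(ρ,ρ⁰)/τ`. -/
theorem minimizer_H1_estimates
    (lam α β θ T X0 ρmin ρmax τ mτ Kτ : ℝ) (ρ0 ρ0' : ℝ → ℝ)
    (hlam : 0 < lam) (hα : 0 < α) (hθ : 0 < θ) (hβθ : β + θ < 1) (hT : 0 < T)
    (hH2 : H2 β θ X0 ρmin ρmax ρ0 ρ0')
    (hτ0 : 0 < τ) (hτ1 : τ < 1) (hmτ : 0 < mτ) (hKτ : 0 < Kτ)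
    (X : ℝ) (ρ : ℝ → ℝ)
    (hmin : IsJKOMin lam α β θ τ Kτ mτ X0 ρ0 X ρ) (hXX0 : X0 ≤ X) :
    (∃ C : ℝ, ∀ᵐ x : ℝ, 0 < x → |ρ x| ≤ C) ∧
    ∃ ρb g : ℝ → ℝ,
      ContRep X ρ ρb ∧
      (∀ x ∈ Icc 0 X, ρb x = ρb 0 + ∫ s in (0:ℝ)..x, g s) ∧
      IntegrableOn (fun x => (g x)^2) (Ioo 0 X) volume ∧
      (∫ x in (0:ℝ)..X, (g x)^2)
        ≤ (eLpNormEssSup ρ (volume.restrict (Ioo 0 X))).toReal * W2sq ρ ρ0 / τ^2 ∧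
      (∫ x in (0:ℝ)..X, |g x|)
        ≤ Real.sqrt X * Real.sqrt (eLpNormEssSup ρ (volume.restrict (Ioo 0 X))).toReal
            * Real.sqrt (W2sq ρ ρ0) / τ := by
  have hX : 0 < X := hH2.1.trans_le hXX0
  obtain ⟨r, hr, hr_eq, hxr, hMr, hxr0, hr1, hfr⟩ := exists_nice_of_H2 hβθ hH2
  have her : ∀ᵐ x : ℝ, 0 < x → ρ0 x = r x := Eventually.of_forall hr_eq
  obtain ⟨⟨hadm, hxρ⟩, hJ⟩ := hmin
  -- a measurable version of the minimizer
  obtain ⟨u, hum, hu0, heu⟩ := hadm.exists_measurable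
  have hu1 := hadm.eventually_one_congr heu
  have hxu : xA u ≤ X := by rwa [← xA_congr heu]
  have hminu : ∀ σ, MemAdm σ → xA σ ≤ X →
      Jfun lam α β θ τ Kτ mτ X0 r X u ≤ Jfun lam α β θ τ Kτ mτ X0 r X σ := fun σ hσ hxσ => by
    have := hJ X σ ⟨hσ, hxσ⟩
    rwa [Jfun_congr heu her, Jfun_congr (Eventually.of_forall fun _ _ => rfl) her] at this
  have hfu := entropy_integrable_of_min hθ hτ0 hmτ hKτ hum hu0 hu1 hr (hxr.trans hXX0) hxr0 hMr
    hr1 hfr hminu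
  have hu := NiceDensity.of_entropy hum hu0 hu1 hfu
  have hEL := fun w hw => euler_lagrange (w := w) hτ0 hX hu hr hfu hxu (hxr.trans hXX0)
    (fun σ hσ hfσ hxσ => hminu σ (hσ.memAdm hfσ.locallyIntegrableOn) hxσ) hw
  obtain ⟨⟨C, hC⟩, ρb, g, ⟨hcont, hrep⟩, hftc, hg, hg1, hg2⟩ :=
    regularity_of_euler_lagrange hτ0 hX hu hxu (W2sq_nonneg u r) hEL
  have hess : eLpNormEssSup ρ (volume.restrict (Ioo 0 X))
      = eLpNormEssSup u (volume.restrict (Ioo 0 X)) := by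
    refine eLpNormEssSup_congr_ae ?_
    filter_upwards [ae_restrict_of_ae heu, ae_restrict_mem measurableSet_Ioo] with x hx hx'
    exact hx hx'.1
  rw [hess, W2sq_congr heu her]
  refine ⟨⟨C, ?_⟩, ρb, g, ⟨hcont, ?_⟩, hftc, hg, hg1, hg2⟩
  · filter_upwards [hC, heu] with x hx hx' hx0
    rw [hx' hx0]
    exact hx hx0
  · filter_upwards [hrep, heu] with x hx hx' hx0
    rw [hx' hx0.1, hx hx0]

end
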